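/- arXiv:2008.06719 — 2 statements merged into one kernel-verified Lean document; each statement's English description precedes it below -/
import Mathlib

section
/- Let A be a linear hyperplane arrangement in ℝ^d and a_0 = (−1)^d χ_A(0) the absolute value of the constant coefficient of its characteristic polynomial. Then for every x ∈ ℝ^d outside the set ∪_{L ∈ L(A), L ≠ {0}} L^⊥, exactly a_0 of the closed chambers C of A satisfy x ∈ C°; moreover for every x ∈ ℝ^d the number of chambers C with x ∈ C° is at least a_0. -/
open scoped RealInnerProductSpace Pointwise Classical
open Set

noncomputable section

abbrev E (d : ℕ) : Type := EuclideanSpace ℝ (Fin d)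

variable {d : ℕ}

/-- Positive hull: all finite nonnegative combinations of elements of `A`. -/
def posHull (A : Set (E d)) : Set (E d) :=
  {x | ∃ (n : ℕ) (c : Fin n → ℝ) (v : Fin n → E d),
    (∀ i, 0 ≤ c i) ∧ (∀ i, v i ∈ A) ∧ x = ∑ i, c i • v i}

/-- Dual (polar) cone. -/
def polarCone (C : Set (E d)) : Set (E d) := {z | ∀ y ∈ C, ⟪z, y⟫ ≤ 0}

/-- A polyhedral cone: finite intersection of linear closed half-spaces. -/
def IsPolyCone (C : Set (E d)) : Prop :=
  ∃ (m : ℕ) (y : Fin m → E d), C = {z | ∀ i, ⟪z, y i⟫ ≤ 0}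

/-- A polyhedral set: finite intersection of closed half-spaces. -/
def IsPolyhedron (P : Set (E d)) : Prop :=
  ∃ (m : ℕ) (y : Fin m → E d) (c : Fin m → ℝ), P = {z | ∀ i, ⟪z, y i⟫ ≤ c i}

/-- Faces of `P`: `P` itself, or intersections with supporting hyperplanes. -/
def IsFaceOf (P F : Set (E d)) : Prop :=
  F = P ∨ ∃ (y : E d) (c : ℝ), (∀ z ∈ P, ⟪y, z⟫ ≤ c) ∧ F = {z | z ∈ P ∧ ⟪y, z⟫ = c}

/-- Dimension of a set: dimension of its affine hull. -/
def sdim (F : Set (E d)) : ℕ := Module.finrank ℝ (affineSpan ℝ F).direction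

/-- The `k`-dimensional (nonempty) faces of `P`. -/
def facesOfDim (P : Set (E d)) (k : ℕ) : Set (Set (E d)) :=
  {F | IsFaceOf P F ∧ F.Nonempty ∧ sdim F = k}

/-- Tangent cone of `P` at a point `f₀`. -/
def tangentConeOf (P : Set (E d)) (f₀ : E d) : Set (E d) :=
  {u | ∃ δ : ℝ, 0 < δ ∧ f₀ + δ • u ∈ P}

/-- Normal cone of `P` at its face `F`: polar of the tangent cone at any
relative interior point of `F`. -/
def normalCone (P F : Set (E d)) : Set (E d) :=
  {z | ∀ f₀ ∈ intrinsicInterior ℝ F, ∀ u ∈ tangentConeOf P f₀, ⟪z, u⟫ ≤ 0}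

/-- `y` is a nearest point of `P` to `x`. -/
def IsNearestPt (P : Set (E d)) (x y : E d) : Prop :=
  y ∈ P ∧ ∀ z ∈ P, dist x y ≤ dist x z

/-- `dim(x,P) = k`: the metric projection of `x` onto `P` lies in the relative
interior of a `k`-dimensional face of `P`. -/
def projDimEq (P : Set (E d)) (x : E d) (k : ℕ) : Prop :=
  ∃ y F, IsNearestPt P x y ∧ IsFaceOf P F ∧ y ∈ intrinsicInterior ℝ F ∧ sdim F = k

def IsHyperplane (H : Set (E d)) : Prop :=
  ∃ (y : E d) (c : ℝ), y ≠ 0 ∧ H = {z | ⟪y, z⟫ = c}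

def IsLinearHyperplane (H : Set (E d)) : Prop :=
  ∃ y : E d, y ≠ 0 ∧ H = {z | ⟪y, z⟫ = 0}

/-- Closed chambers of the complement of the set `S`. -/
def IsChamberOfUnion (S P : Set (E d)) : Prop :=
  ∃ x : E d, x ∉ S ∧ P = closure (connectedComponentIn Sᶜ x)

/-- Closed chambers of the hyperplane arrangement `A`. -/
def IsChamber (A : Finset (Set (E d))) (P : Set (E d)) : Prop :=
  IsChamberOfUnion (⋃ H ∈ A, H) P

/-- Intersection of a finite subcollection of hyperplanes (`⊤` for `∅`). -/
def interSet (B : Finset (Set (E d))) : Set (E d) := ⋂ H ∈ B, H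

/-- The unsigned coefficient `a_k` of the characteristic polynomial:
`χ_A(t) = Σ_k (-1)^(d-k) a_k t^k` via Whitney's formula. -/
def charCoeff (A : Finset (Set (E d))) (k : ℕ) : ℤ :=
  (-1 : ℤ) ^ (d - k) *
    ∑ B ∈ A.powerset,
      if (interSet B).Nonempty ∧ sdim (interSet B) = k then (-1 : ℤ) ^ B.card else 0

/-!
Removing a hyperplane `ker f` from an arrangement merges exactly those pairs of chambers whose
common wall is a chamber of the arrangement induced on `ker f`. This deletion-restriction
recursion persists when only chambers meeting a fixed open convex set `C` are counted, and it gives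
a Zaslavsky formula for their number: a signed sum over the subarrangements whose intersection
meets `C`. A chamber has `x` in its dual cone iff it misses the open half-space
`{z | 0 < ⟪x, z⟫}`, so subtracting the formula for this half-space from the one for `C = ℝ^d`
leaves the subarrangements on whose intersection `⟪x, ·⟫` vanishes. For `x` outside all `L^⊥` with
`L ≠ {0}` these are the ones with intersection `{0}`, and they contribute `a_0`. Dual cones are
closed and there are finitely many chambers, so the number of chambers with `x` in their dual cone
is upper semicontinuous in `x`; as the generic points are dense, it is never below its generic
value.
-/

lemma finrank_inf_ker_add_one {𝕜 U : Type*} [DivisionRing 𝕜] [AddCommGroup U] [Module 𝕜 U]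
    {W : Submodule 𝕜 U} [FiniteDimensional 𝕜 W] {f : Module.Dual 𝕜 U}
    (hW : ¬ W ≤ LinearMap.ker f) :
    Module.finrank 𝕜 (W ⊓ LinearMap.ker f : Submodule 𝕜 U) + 1 = Module.finrank 𝕜 W := by
  rw [← Submodule.map_comap_subtype, Submodule.finrank_map_subtype_eq,
    ← LinearMap.ker_domRestrict]
  refine Module.Dual.finrank_ker_add_one_of_ne_zero fun h => hW fun w hw => ?_
  exact LinearMap.congr_fun h ⟨w, hw⟩

lemma dense_compl_biUnion_submodule {α U : Type*} [AddCommGroup U] [Module ℝ U]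
    [TopologicalSpace U] [ContinuousAdd U] [ContinuousSMul ℝ U] [BaireSpace U] {s : Set α}
    (hs : s.Countable) {K : α → Submodule ℝ U} (hclosed : ∀ a ∈ s, IsClosed (K a : Set U))
    (hne : ∀ a ∈ s, K a ≠ ⊤) : Dense (⋃ a ∈ s, (K a : Set U))ᶜ := by
  rw [compl_iUnion₂]
  refine dense_biInter_of_isOpen (fun a ha => (hclosed a ha).isOpen_compl) hs fun a ha => ?_
  rw [← interior_eq_empty_iff_dense_compl]
  by_contra hint
  exact hne a ha ((K a).eq_top_of_nonempty_interior' (nonempty_iff_ne_empty.2 hint))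

section SignCells

variable {ι V : Type*} [AddCommGroup V] [Module ℝ V] [TopologicalSpace V]

/-- The open cone of the arrangement `{ker (φ i)}_{i ∈ S}` on which the functionals indexed by
`T ⊆ S` are positive and the remaining ones negative. The nonempty ones are the open chambers. -/
def signCell (φ : ι → StrongDual ℝ V) (S T : Finset ι) : Set V :=
  (⋂ i ∈ T, {z | 0 < φ i z}) ∩ ⋂ i ∈ S \ T, {z | φ i z < 0}

/-- The flat cut out by the hyperplanes `ker (φ i)`, `i ∈ B`. -/
def commonKer (φ : ι → StrongDual ℝ V) (B : Finset ι) : Submodule ℝ V :=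
  ⨅ i ∈ B, (φ i).ker

/-- The sign patterns (encoded by their sets of positive indices) of the open chambers of
`{ker (φ i)}_{i ∈ S}` that meet `K`. -/
def signPatternsMeeting (φ : ι → StrongDual ℝ V) (S : Finset ι) (K : Set V) :
    Finset (Finset ι) :=
  {T ∈ S.powerset | (K ∩ signCell φ S T).Nonempty}

/-- The sign patterns of the open chambers of `{ker (φ i)}_{i ∈ S}` on which `f ≤ 0`. -/
def nonposSignPatterns (φ : ι → StrongDual ℝ V) (S : Finset ι) (f : StrongDual ℝ V) :
    Finset (Finset ι) :=
  {T ∈ S.powerset | (signCell φ S T).Nonempty ∧ ∀ z ∈ signCell φ S T, f z ≤ 0}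

/-- Whitney's alternating sum for the arrangement induced on the subspace `W`, in which only the
flats meeting `C` are counted, each weighted by the parity of its dimension. -/
def whitneySum (φ : ι → StrongDual ℝ V) (S : Finset ι) (C : Set V) (W : Submodule ℝ V) : ℤ :=
  ∑ B ∈ S.powerset,
    if (((W ⊓ commonKer φ B : Submodule ℝ V) : Set V) ∩ C).Nonempty then
      (-1) ^ (B.card + Module.finrank ℝ (W ⊓ commonKer φ B : Submodule ℝ V))
    else 0

variable {φ : ι → StrongDual ℝ V} {S T : Finset ι} {i : ι} {f : StrongDual ℝ V}
  {W : Submodule ℝ V} {C K : Set V}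

lemma mem_commonKer {z : V} : z ∈ commonKer φ T ↔ ∀ i ∈ T, φ i z = 0 := by
  simp only [commonKer, Submodule.mem_iInf, LinearMap.mem_ker, ContinuousLinearMap.coe_coe]

lemma commonKer_insert : commonKer φ (insert i T) = (φ i).ker ⊓ commonKer φ T :=
  Finset.iInf_insert ..

lemma mem_signCell {z : V} :
    z ∈ signCell φ S T ↔ (∀ i ∈ T, 0 < φ i z) ∧ ∀ i ∈ S \ T, φ i z < 0 := by
  simp only [signCell, mem_inter_iff, mem_iInter, mem_ofPred_eq]

lemma signCell_insert_insert (hi : i ∉ S) :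
    signCell φ (insert i S) (insert i T) = signCell φ S T ∩ {z | 0 < φ i z} := by
  rw [signCell, Finset.insert_sdiff_insert, Finset.sdiff_insert_of_notMem hi,
    Finset.set_biInter_insert, inter_comm {z | 0 < φ i z}, inter_right_comm, signCell]

lemma signCell_insert_of_notMem (hi : i ∉ T) :
    signCell φ (insert i S) T = signCell φ S T ∩ {z | φ i z < 0} := by
  rw [signCell, Finset.insert_sdiff_of_notMem S hi, Finset.set_biInter_insert,
    inter_comm {z | φ i z < 0}, ← inter_assoc, signCell]

lemma isOpen_signCell : IsOpen (signCell φ S T) :=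
  (isOpen_biInter_finset fun i _ => isOpen_lt continuous_const (φ i).continuous).inter
    (isOpen_biInter_finset fun i _ => isOpen_lt (φ i).continuous continuous_const)

lemma convex_signCell : Convex ℝ (signCell φ S T) :=
  (convex_iInter₂ fun i _ => convex_halfSpace_gt (φ i).isLinear 0).inter
    (convex_iInter₂ fun i _ => convex_halfSpace_lt (φ i).isLinear 0)

lemma apply_ne_zero_of_mem_signCell {z : V} (hz : z ∈ signCell φ S T) (hi : i ∈ S) :
    φ i z ≠ 0 := by
  obtain ⟨hpos, hneg⟩ := mem_signCell.1 hz
  by_cases hiT : i ∈ T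
  · exact (hpos i hiT).ne'
  · exact (hneg i (Finset.mem_sdiff.2 ⟨hi, hiT⟩)).ne

lemma mem_signCell_filter_pos {z : V} (hz : ∀ i ∈ S, φ i z ≠ 0) :
    z ∈ signCell φ S {i ∈ S | 0 < φ i z} := by
  refine mem_signCell.2 ⟨fun i hi => (Finset.mem_filter.1 hi).2, fun i hi => ?_⟩
  obtain ⟨hiS, hnot⟩ := Finset.mem_sdiff.1 hi
  exact (not_lt.1 fun hpos => hnot (Finset.mem_filter.2 ⟨hiS, hpos⟩)).lt_of_ne (hz i hiS)

lemma exists_apply_eq_zero_of_isPreconnected (hK : IsPreconnected K) {a b : V} (ha : a ∈ K)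
    (hb : b ∈ K) (hfa : f a < 0) (hfb : 0 < f b) : ∃ z ∈ K, f z = 0 :=
  hK.intermediate_value ha hb f.continuous.continuousOn ⟨hfa.le, hfb.le⟩

lemma subset_of_mem_closure_signCell {T' : Finset ι} (hT : T ⊆ S) {z : V}
    (hz : z ∈ signCell φ S T) (hz' : z ∈ closure (signCell φ S T')) : T ⊆ T' := by
  intro i hi
  by_contra hi'
  have hle : signCell φ S T' ⊆ {w | φ i w ≤ 0} := fun w hw =>
    ((mem_signCell.1 hw).2 i (Finset.mem_sdiff.2 ⟨hT hi, hi'⟩)).le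
  have hz_le : φ i z ≤ 0 :=
    closure_minimal hle (isClosed_le (φ i).continuous continuous_const) hz'
  exact hz_le.not_gt ((mem_signCell.1 hz).1 i hi)

lemma injOn_closure_signCell :
    InjOn (fun T => closure (signCell φ S T)) {T | T ⊆ S ∧ (signCell φ S T).Nonempty} := by
  rintro T ⟨hT, z, hz⟩ T' ⟨hT', z', hz'⟩ (h : closure _ = closure _)
  exact (subset_of_mem_closure_signCell hT hz (h ▸ subset_closure hz)).antisymm
    (subset_of_mem_closure_signCell hT' hz' (h ▸ subset_closure hz'))

lemma card_signPatternsMeeting_empty :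
    (signPatternsMeeting φ ∅ K).card = if K.Nonempty then 1 else 0 := by
  have hcell : signCell φ ∅ ∅ = univ := by simp [signCell]
  rw [signPatternsMeeting, Finset.card_filter, Finset.powerset_empty, Finset.sum_singleton, hcell,
    inter_univ]

lemma signPatternsMeeting_insert_of_le_ker (hW : W ≤ (φ i).ker) :
    signPatternsMeeting φ (insert i S) (W ∩ C) = ∅ := by
  refine Finset.filter_eq_empty_iff.2 ?_
  rintro T - ⟨z, ⟨hzW, -⟩, hz⟩
  exact apply_ne_zero_of_mem_signCell hz (Finset.mem_insert_self i S) (hW hzW)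

lemma card_nonposSignPatterns_add_card_signPatternsMeeting_pos :
    (nonposSignPatterns φ S f).card + (signPatternsMeeting φ S {z | 0 < f z}).card =
      (signPatternsMeeting φ S univ).card := by
  simp only [nonposSignPatterns, signPatternsMeeting, Finset.card_filter, univ_inter]
  rw [← Finset.sum_add_distrib]
  refine Finset.sum_congr rfl fun T _ => ?_
  have hmeet : ({z | 0 < f z} ∩ signCell φ S T).Nonempty ↔ ¬ ∀ z ∈ signCell φ S T, f z ≤ 0 := by
    push Not
    exact exists_congr fun z => and_comm
  have hne : ({z | 0 < f z} ∩ signCell φ S T).Nonempty → (signCell φ S T).Nonempty :=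
    Nonempty.right
  grind

lemma whitneySum_empty :
    whitneySum φ ∅ C W =
      if ((W : Set V) ∩ C).Nonempty then (-1) ^ Module.finrank ℝ W else 0 := by
  have hflat : W ⊓ commonKer φ ∅ = W := by simp [commonKer]
  rw [whitneySum, Finset.powerset_empty, Finset.sum_singleton, hflat, Finset.card_empty, zero_add]

lemma whitneySum_insert (hi : i ∉ S) :
    whitneySum φ (insert i S) C W = whitneySum φ S C W - whitneySum φ S C (W ⊓ (φ i).ker) := by
  rw [whitneySum, Finset.sum_powerset_insert hi, sub_eq_add_neg, whitneySum, whitneySum,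
    ← Finset.sum_neg_distrib]
  congr 1
  refine Finset.sum_congr rfl fun B hB => ?_
  have hiB : i ∉ B := fun h => hi (Finset.mem_powerset.1 hB h)
  rw [Finset.card_insert_of_notMem hiB, commonKer_insert, ← inf_assoc]
  split_ifs
  · ring
  · exact neg_zero.symm

variable [IsTopologicalAddGroup V] [ContinuousSMul ℝ V]

lemma connectedComponentIn_eq_signCell (hT : T ⊆ S) {p : V} (hp : p ∈ signCell φ S T) :
    connectedComponentIn {z | ∀ i ∈ S, φ i z ≠ 0} p = signCell φ S T := by
  have hsub : signCell φ S T ⊆ {z | ∀ i ∈ S, φ i z ≠ 0} := fun z hz i hi =>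
    apply_ne_zero_of_mem_signCell hz hi
  refine Subset.antisymm (fun z hz => ?_)
    (convex_signCell.isPreconnected.subset_connectedComponentIn hp hsub)
  have hpre := isPreconnected_connectedComponentIn (x := p) (F := {z | ∀ i ∈ S, φ i z ≠ 0})
  have hpmem := mem_connectedComponentIn (hsub hp)
  have hne := connectedComponentIn_subset {z | ∀ i ∈ S, φ i z ≠ 0} p
  refine mem_signCell.2 ⟨fun i hi => ?_, fun i hi => ?_⟩
  · by_contra hzi
    have hzi' : φ i z < 0 := (not_lt.1 hzi).lt_of_ne (hne hz i (hT hi))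
    obtain ⟨w, hw, hw0⟩ := exists_apply_eq_zero_of_isPreconnected hpre hz hpmem hzi'
      ((mem_signCell.1 hp).1 i hi)
    exact hne hw i (hT hi) hw0
  · have hiS := (Finset.mem_sdiff.1 hi).1
    by_contra hzi
    have hzi' : 0 < φ i z := (not_lt.1 hzi).lt_of_ne' (hne hz i hiS)
    obtain ⟨w, hw, hw0⟩ := exists_apply_eq_zero_of_isPreconnected hpre hpmem hz
      ((mem_signCell.1 hp).2 i hi) hzi'
    exact hne hw i hiS hw0

lemma nonempty_inter_pos_of_nonempty_inf_ker_inter (hC : IsOpen C) (hW : ¬ W ≤ f.ker)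
    (h : (((W ⊓ f.ker : Submodule ℝ V) : Set V) ∩ C).Nonempty) :
    ((W : Set V) ∩ (C ∩ {z | 0 < f z})).Nonempty := by
  obtain ⟨z, ⟨hzW, hz0⟩, hzC⟩ := h
  obtain ⟨v, hvW, hv⟩ : ∃ v ∈ W, 0 < f v := by
    obtain ⟨v, hvW, hv⟩ := SetLike.not_le_iff_exists.1 hW
    rcases lt_or_gt_of_ne hv with hneg | hpos
    · exact ⟨-v, W.neg_mem hvW, by simpa using hneg⟩
    · exact ⟨v, hvW, hpos⟩
  have hcont : ContinuousAt (fun t : ℝ => z + t • v) 0 := by fun_prop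
  have hnear : ∀ᶠ t : ℝ in nhdsWithin 0 (Ioi 0), z + t • v ∈ C :=
    (hcont.eventually (hC.mem_nhds (by simpa using hzC))).filter_mono nhdsWithin_le_nhds
  obtain ⟨t, htC, ht⟩ := (hnear.and self_mem_nhdsWithin).exists
  refine ⟨z + t • v, W.add_mem hzW (W.smul_mem t hvW), htC, ?_⟩
  have hfz : f z = 0 := hz0
  simpa [hfz] using mul_pos ht hv

lemma nonempty_inter_neg_of_nonempty_inf_ker_inter (hC : IsOpen C) (hW : ¬ W ≤ f.ker)
    (h : (((W ⊓ f.ker : Submodule ℝ V) : Set V) ∩ C).Nonempty) :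
    ((W : Set V) ∩ (C ∩ {z | f z < 0})).Nonempty := by
  have hker : (-f).ker = f.ker := by ext; simp
  simpa using nonempty_inter_pos_of_nonempty_inf_ker_inter (f := -f) hC (hker ▸ hW) (hker ▸ h)

lemma nonempty_inf_ker_inter_of_nonempty_neg_of_nonempty_pos (hC : Convex ℝ C)
    (hneg : ((W : Set V) ∩ (C ∩ {z | f z < 0})).Nonempty)
    (hpos : ((W : Set V) ∩ (C ∩ {z | 0 < f z})).Nonempty) :
    (((W ⊓ f.ker : Submodule ℝ V) : Set V) ∩ C).Nonempty := by
  obtain ⟨a, haW, haC, ha⟩ := hneg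
  obtain ⟨b, hbW, hbC, hb⟩ := hpos
  obtain ⟨z, ⟨hzW, hzC⟩, hz⟩ := exists_apply_eq_zero_of_isPreconnected
    (W.convex.inter hC).isPreconnected ⟨haW, haC⟩ ⟨hbW, hbC⟩ ha hb
  exact ⟨z, ⟨hzW, hz⟩, hzC⟩

lemma ite_nonempty_neg_add_ite_nonempty_pos (hCo : IsOpen C) (hCc : Convex ℝ C)
    (hW : ¬ W ≤ f.ker) :
    (if ((W : Set V) ∩ (C ∩ {z | f z < 0})).Nonempty then 1 else 0) +
        (if ((W : Set V) ∩ (C ∩ {z | 0 < f z})).Nonempty then 1 else 0) =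
      (if ((W : Set V) ∩ C).Nonempty then 1 else 0) +
        if (((W ⊓ f.ker : Submodule ℝ V) : Set V) ∩ C).Nonempty then 1 else 0 := by
  have hneg := nonempty_inter_neg_of_nonempty_inf_ker_inter hCo hW
  have hpos := nonempty_inter_pos_of_nonempty_inf_ker_inter hCo hW
  have hcross := nonempty_inf_ker_inter_of_nonempty_neg_of_nonempty_pos hCc (W := W) (f := f)
  have hsplit : ((W : Set V) ∩ C).Nonempty ↔
      ((W : Set V) ∩ (C ∩ {z | f z < 0})).Nonempty ∨
        ((W : Set V) ∩ (C ∩ {z | 0 < f z})).Nonempty ∨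
          (((W ⊓ f.ker : Submodule ℝ V) : Set V) ∩ C).Nonempty := by
    refine ⟨fun ⟨z, hzW, hzC⟩ => ?_, ?_⟩
    · rcases lt_trichotomy (f z) 0 with h | h | h
      · exact .inl ⟨z, hzW, hzC, h⟩
      · exact .inr (.inr ⟨z, ⟨hzW, h⟩, hzC⟩)
      · exact .inr (.inl ⟨z, hzW, hzC, h⟩)
    · rintro (⟨z, hzW, hzC, -⟩ | ⟨z, hzW, hzC, -⟩ | ⟨z, ⟨hzW, -⟩, hzC⟩) <;> exact ⟨z, hzW, hzC⟩
  grind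

lemma card_signPatternsMeeting_insert (hi : i ∉ S) (hCo : IsOpen C) (hCc : Convex ℝ C)
    (hW : ¬ W ≤ (φ i).ker) :
    (signPatternsMeeting φ (insert i S) (W ∩ C)).card =
      (signPatternsMeeting φ S (W ∩ C)).card +
        (signPatternsMeeting φ S (((W ⊓ (φ i).ker : Submodule ℝ V) : Set V) ∩ C)).card := by
  simp only [signPatternsMeeting, Finset.card_filter]
  rw [Finset.sum_powerset_insert hi, ← Finset.sum_add_distrib, ← Finset.sum_add_distrib]
  refine Finset.sum_congr rfl fun T hT => ?_
  have hiT : i ∉ T := fun h => hi (Finset.mem_powerset.1 hT h)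
  rw [signCell_insert_of_notMem hiT, signCell_insert_insert hi]
  simpa only [inter_assoc] using ite_nonempty_neg_add_ite_nonempty_pos
    (hCo.inter isOpen_signCell) (hCc.inter (convex_signCell (S := S) (T := T))) hW

theorem card_signPatternsMeeting [FiniteDimensional ℝ W] (hCo : IsOpen C) (hCc : Convex ℝ C) :
    ((signPatternsMeeting φ S (W ∩ C)).card : ℤ) =
      (-1) ^ Module.finrank ℝ W * whitneySum φ S C W := by
  induction S using Finset.induction_on generalizing W with
  | empty =>
    rw [whitneySum_empty, mul_ite, mul_zero, ← pow_add, (Even.add_self _).neg_one_pow]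
    rw [card_signPatternsMeeting_empty, Nat.cast_ite, Nat.cast_one, Nat.cast_zero]
  | insert i S hi ih =>
    rw [whitneySum_insert hi]
    by_cases hW : W ≤ (φ i).ker
    · rw [signPatternsMeeting_insert_of_le_ker hW, inf_eq_left.2 hW, sub_self, mul_zero,
        Finset.card_empty, Nat.cast_zero]
    · rw [card_signPatternsMeeting_insert hi hCo hCc hW, Nat.cast_add, ih, ih,
        ← finrank_inf_ker_add_one hW]
      ring

theorem card_nonposSignPatterns [FiniteDimensional ℝ V] :
    ((nonposSignPatterns φ S f).card : ℤ) = (-1) ^ Module.finrank ℝ V *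
      ∑ B ∈ S.powerset, if commonKer φ B ≤ f.ker then
        (-1) ^ (B.card + Module.finrank ℝ (commonKer φ B)) else 0 := by
  have hall := card_signPatternsMeeting (φ := φ) (S := S) (W := ⊤) isOpen_univ convex_univ
  have hpos := card_signPatternsMeeting (φ := φ) (S := S) (W := ⊤)
    (isOpen_lt continuous_const f.continuous) (convex_halfSpace_gt f.isLinear 0)
  have hadd := card_nonposSignPatterns_add_card_signPatternsMeeting_pos (φ := φ) (S := S) (f := f)
  rw [Submodule.top_coe, univ_inter, finrank_top] at hall hpos
  zify at hadd
  rw [eq_sub_of_add_eq hadd, hall, hpos, ← mul_sub, whitneySum,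
    whitneySum, ← Finset.sum_sub_distrib]
  congr 1
  refine Finset.sum_congr rfl fun B _ => ?_
  have hmeet : ((commonKer φ B : Set V) ∩ {z | 0 < f z}).Nonempty ↔ ¬ commonKer φ B ≤ f.ker := by
    constructor
    · rintro ⟨z, hzB, hz⟩ hle
      exact ne_of_gt hz (hle hzB)
    · intro hle
      simpa using nonempty_inter_pos_of_nonempty_inf_ker_inter isOpen_univ hle ⟨0, by simp⟩
  have huniv : ((commonKer φ B : Set V) ∩ univ).Nonempty := ⟨0, zero_mem _, trivial⟩
  rw [top_inf_eq, if_pos huniv]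
  simp only [hmeet, ite_not]
  split_ifs <;> ring

theorem card_nonposSignPatterns_of_generic [FiniteDimensional ℝ V]
    (hf : ∀ B ⊆ S, commonKer φ B ≤ f.ker → commonKer φ B = ⊥) :
    ((nonposSignPatterns φ S f).card : ℤ) = (-1) ^ Module.finrank ℝ V *
      ∑ B ∈ S.powerset, if commonKer φ B = ⊥ then (-1) ^ B.card else 0 := by
  rw [card_nonposSignPatterns]
  congr 1
  refine Finset.sum_congr rfl fun B hB => ?_
  by_cases hbot : commonKer φ B = ⊥
  · rw [if_pos hbot, hbot, if_pos bot_le, finrank_bot, add_zero]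
  · rw [if_neg hbot, if_neg fun hle => hbot (hf B (Finset.mem_powerset.1 hB) hle)]

end SignCells

section Arrangement

lemma polarCone_closure (C : Set (E d)) : polarCone (closure C) = polarCone C := by
  refine Subset.antisymm (fun x hx z hz => hx z (subset_closure hz)) fun x hx => ?_
  exact closure_minimal (t := {z | ⟪x, z⟫ ≤ 0}) hx (isClosed_le (by fun_prop) (by fun_prop))

lemma isClosed_polarCone (C : Set (E d)) : IsClosed (polarCone C) := by
  simp only [polarCone, ofPred_forall]
  exact isClosed_biInter fun y _ => isClosed_le (by fun_prop) (by fun_prop)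

lemma eventually_mem_polarCone_imp {𝒞 : Set (Set (E d))} (h𝒞 : 𝒞.Finite) (x : E d) :
    ∀ᶠ x' in nhds x, ∀ C ∈ 𝒞, x' ∈ polarCone C → x ∈ polarCone C := by
  refine (Filter.eventually_all_finite h𝒞).2 fun C _ => ?_
  by_cases hx : x ∈ polarCone C
  · exact .of_forall fun _ _ => hx
  · filter_upwards [(isClosed_polarCone C).isOpen_compl.mem_nhds hx] with x' hx' hmem
    exact absurd hmem hx'

lemma sdim_coe_submodule (W : Submodule ℝ (E d)) : sdim (W : Set (E d)) = Module.finrank ℝ W := by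
  have hspan : affineSpan ℝ (W : Set (E d)) = W.toAffineSubspace :=
    AffineSubspace.affineSpan_coe W.toAffineSubspace
  rw [sdim, hspan, Submodule.toAffineSubspace_direction]

/-- The union of the orthogonal complements `L^⊥` over the nonzero flats `L` of `A`. -/
def exceptionalSet (A : Finset (Set (E d))) : Set (E d) :=
  {x | ∃ B ∈ A.powerset, interSet B ≠ ({0} : Set (E d)) ∧
    x ∈ ((Submodule.span ℝ (interSet B))ᗮ : Submodule ℝ (E d))}

/-- The hyperplanes of `A` are the kernels of the functionals `φ`, indexed by the hyperplanes
themselves. -/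
def IsDefinedBy (A : Finset (Set (E d))) (φ : Set (E d) → StrongDual ℝ (E d)) : Prop :=
  ∀ H ∈ A, H = ((φ H).ker : Set (E d))

variable {A B : Finset (Set (E d))} {φ : Set (E d) → StrongDual ℝ (E d)} {x : E d}

lemma exists_isDefinedBy (hA : ∀ H ∈ A, IsLinearHyperplane H) : ∃ φ, IsDefinedBy A φ := by
  choose! y _ hy using hA
  exact ⟨fun H => innerSL ℝ (y H), hy⟩

namespace IsDefinedBy

lemma interSet_eq (hφ : IsDefinedBy A φ) (hB : B ⊆ A) : interSet B = commonKer φ B := by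
  ext z
  simp only [interSet, mem_iInter, SetLike.mem_coe, mem_commonKer]
  refine forall₂_congr fun H hH => ?_
  conv_lhs => rw [hφ H (hB hH)]
  rfl

lemma charCoeff_eq (hφ : IsDefinedBy A φ) (k : ℕ) :
    charCoeff A k = (-1) ^ (d - k) *
      ∑ B ∈ A.powerset, if Module.finrank ℝ (commonKer φ B) = k then (-1) ^ B.card else 0 := by
  rw [charCoeff]
  congr 1
  refine Finset.sum_congr rfl fun B hB => ?_
  have hne : (commonKer φ B : Set (E d)).Nonempty := ⟨0, zero_mem _⟩
  simp only [hφ.interSet_eq (Finset.mem_powerset.1 hB), sdim_coe_submodule, hne, true_and]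

lemma mem_exceptionalSet (hφ : IsDefinedBy A φ) :
    x ∈ exceptionalSet A ↔ ∃ B ⊆ A, commonKer φ B ≠ ⊥ ∧ x ∈ (commonKer φ B)ᗮ := by
  simp only [exceptionalSet, mem_ofPred_eq, Finset.mem_powerset]
  refine exists_congr fun B => and_congr_right fun hB => ?_
  rw [hφ.interSet_eq hB, Submodule.span_eq, ← Submodule.bot_coe (R := ℝ), Ne, SetLike.coe_set_eq]

lemma dense_compl_exceptionalSet (hφ : IsDefinedBy A φ) : Dense (exceptionalSet A)ᶜ := by
  have hunion : exceptionalSet A =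
      ⋃ B ∈ {B | B ⊆ A ∧ commonKer φ B ≠ ⊥}, ((commonKer φ B)ᗮ : Set (E d)) := by
    ext x
    simp only [hφ.mem_exceptionalSet, mem_iUnion, mem_ofPred_eq, exists_prop, and_assoc,
      SetLike.mem_coe]
  have hfin : {B | B ⊆ A ∧ commonKer φ B ≠ ⊥}.Finite :=
    A.powerset.finite_toSet.subset fun B hB => Finset.mem_coe.2 (Finset.mem_powerset.2 hB.1)
  rw [hunion]
  exact dense_compl_biUnion_submodule hfin.countable
    (fun B _ => (commonKer φ B).isClosed_orthogonal)
    fun B hB => (Submodule.orthogonal_eq_top_iff _).not.2 hB.2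

lemma setOf_isChamber_eq_image (hφ : IsDefinedBy A φ) :
    {C | IsChamber A C} =
      (fun T => closure (signCell φ A T)) '' {T | T ⊆ A ∧ (signCell φ A T).Nonempty} := by
  have hcompl : (⋃ H ∈ A, H)ᶜ = {z | ∀ H ∈ A, φ H z ≠ 0} := by
    ext z
    simp only [mem_compl_iff, mem_iUnion, not_exists, mem_ofPred_eq]
    refine forall₂_congr fun H hH => not_congr ?_
    conv_lhs => rw [hφ H hH]
    rfl
  ext C
  constructor
  · rintro ⟨p, hp, rfl⟩
    have hpcell := mem_signCell_filter_pos (hcompl.subset hp)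
    have hsub : {H ∈ A | 0 < φ H p} ⊆ A := Finset.filter_subset _ _
    refine ⟨_, ⟨hsub, p, hpcell⟩, ?_⟩
    rw [hcompl, connectedComponentIn_eq_signCell hsub hpcell]
  · rintro ⟨T, ⟨hT, p, hp⟩, rfl⟩
    refine ⟨p, hcompl.superset fun H hH => apply_ne_zero_of_mem_signCell hp hH, ?_⟩
    rw [hcompl, connectedComponentIn_eq_signCell hT hp]

lemma finite_setOf_isChamber (hφ : IsDefinedBy A φ) : {C | IsChamber A C}.Finite := by
  rw [hφ.setOf_isChamber_eq_image]
  exact (A.powerset.finite_toSet.subset fun T hT =>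
    Finset.mem_coe.2 (Finset.mem_powerset.2 hT.1)).image _

lemma ncard_chambers_polarCone (hφ : IsDefinedBy A φ) (x : E d) :
    {C | IsChamber A C ∧ x ∈ polarCone C}.ncard = (nonposSignPatterns φ A (innerSL ℝ x)).card := by
  have himage : {C | IsChamber A C ∧ x ∈ polarCone C} =
      (fun T => closure (signCell φ A T)) '' nonposSignPatterns φ A (innerSL ℝ x) := by
    rw [ofPred_and, hφ.setOf_isChamber_eq_image]
    ext C
    simp only [nonposSignPatterns, Finset.coe_filter, Finset.mem_powerset]
    constructor
    · rintro ⟨⟨T, ⟨hT, hne⟩, rfl⟩, hx : x ∈ polarCone (closure _)⟩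
      exact ⟨T, ⟨hT, hne, (polarCone_closure (signCell φ A T)).subset hx⟩, rfl⟩
    · rintro ⟨T, ⟨hT, hne, hx⟩, rfl⟩
      exact ⟨⟨T, ⟨hT, hne⟩, rfl⟩, (polarCone_closure (signCell φ A T)).superset hx⟩
  have hinj : InjOn (fun T => closure (signCell φ A T)) (nonposSignPatterns φ A (innerSL ℝ x)) :=
    injOn_closure_signCell.mono fun T hT => by
      obtain ⟨hTA, hne, -⟩ := Finset.mem_filter.1 hT
      exact ⟨Finset.mem_powerset.1 hTA, hne⟩
  rw [himage, hinj.ncard_image, ncard_coe_finset]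

lemma ncard_chambers_polarCone_of_notMem (hφ : IsDefinedBy A φ) (hx : x ∉ exceptionalSet A) :
    ({C | IsChamber A C ∧ x ∈ polarCone C}.ncard : ℤ) = charCoeff A 0 := by
  have hgeneric : ∀ B ⊆ A, commonKer φ B ≤ (innerSL ℝ x).ker → commonKer φ B = ⊥ := by
    intro B hB hle
    by_contra hbot
    exact hx (hφ.mem_exceptionalSet.2
      ⟨B, hB, hbot, (Submodule.mem_orthogonal' _ _).2 fun z hz => hle hz⟩)
  rw [hφ.ncard_chambers_polarCone, card_nonposSignPatterns_of_generic hgeneric, hφ.charCoeff_eq]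
  simp only [finrank_euclideanSpace_fin, Nat.sub_zero, Submodule.finrank_eq_zero]

lemma exists_notMem_exceptionalSet_ncard_le (hφ : IsDefinedBy A φ) (x : E d) :
    ∃ x' ∉ exceptionalSet A, {C | IsChamber A C ∧ x' ∈ polarCone C}.ncard ≤
      {C | IsChamber A C ∧ x ∈ polarCone C}.ncard := by
  obtain ⟨x', hx', himp⟩ := mem_closure_iff_frequently.1 (hφ.dense_compl_exceptionalSet x)
    |>.and_eventually (eventually_mem_polarCone_imp hφ.finite_setOf_isChamber x) |>.exists
  refine ⟨x', hx', ncard_le_ncard (fun C hC => ⟨hC.1, himp C hC.1 hC.2⟩) ?_⟩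
  exact hφ.finite_setOf_isChamber.subset fun C hC => hC.1

end IsDefinedBy

end Arrangement

/-- for a linear arrangement, outside `∪_{L ∈ L(A), L ≠ {0}} L^⊥`
exactly `a_0` chambers `C` satisfy `x ∈ C°`; and always at least `a_0`. -/
theorem stmt10 {d : ℕ} (A : Finset (Set (E d)))
    (hA : ∀ H ∈ A, IsLinearHyperplane H) :
    (∀ x : E d,
      x ∉ {y : E d | ∃ B ∈ A.powerset, interSet B ≠ ({0} : Set (E d)) ∧
            y ∈ ((Submodule.span ℝ (interSet B))ᗮ : Submodule ℝ (E d))} →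
      (Set.ncard {C : Set (E d) | IsChamber A C ∧ x ∈ polarCone C} : ℤ) = charCoeff A 0) ∧
    ∀ x : E d,
      charCoeff A 0 ≤ (Set.ncard {C : Set (E d) | IsChamber A C ∧ x ∈ polarCone C} : ℤ) := by
  obtain ⟨φ, hφ⟩ := exists_isDefinedBy hA
  refine ⟨fun x hx => hφ.ncard_chambers_polarCone_of_notMem hx, fun x => ?_⟩
  obtain ⟨x', hx', hle⟩ := hφ.exists_notMem_exceptionalSet_ncard_le x
  rw [← hφ.ncard_chambers_polarCone_of_notMem hx']
  exact mod_cast hle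
end
end

section
/- Let P ⊆ ℝ^d be a bounded polyhedral set (a polytope). Then for every x ∈ ℝ^d, Σ_{k=0}^d (−1)^k Σ_{F ∈ F_k(P)} 1_{F − N_F(P)}(x) = 1, where the inner sum is over all k-dimensional faces F of P and F − N_F(P) = {f − n : f ∈ F, n ∈ N_F(P)}. -/
open scoped RealInnerProductSpace Pointwise Classical
open Set

noncomputable section

variable {d : ℕ}

/-!
The Euler characteristic is the additive functional `χ` on integral combinations of indicators of
relatively open convex sets with `χ(1_O) = (-1) ^ dim O` for `O ≠ ∅`; it is well defined because it
can be computed by integrating along the fibres of a linear map, which reduces everything to the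
line. In the same way `χ = 1` on nonempty compact convex sets, and `χ = 0` on closed sets that are
stable under translation along a ray escaping to infinity in a half-space containing the set.

Since `P` is the disjoint union of the relative interiors of its faces, `∑ (-1) ^ dim F = χ(P) = 1`
over all faces `F`, so it is enough that the faces with `x ∉ F - N_F(P)` contribute `0`. Group them
by the point `f` of `F` nearest to `x`. Those with a given `f` are the faces of the tangent cone of
`P` at `f` on which `⟪f - x, ·⟫ ≥ 0`, while `⟪f - x, ·⟫` is positive somewhere on the cone. Their
signs add up to the Euler characteristic of the part of the cone in the half-space
`⟪f - x, ·⟫ ≥ 0`, which is `0`.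
-/

open Filter Module Topology

section RelOpenConvex

variable {U V W : Type*} [AddCommGroup U] [Module ℝ U] [AddCommGroup V] [Module ℝ V]
  [AddCommGroup W] [Module ℝ W]

/-- Relatively open convex sets, encoded by Rockafellar's criterion: a convex set is open in its
affine span iff every segment `[q, p]` in it can be prolonged beyond `p` inside the set. -/
structure IsRelOpenConvex (O : Set V) : Prop where
  convex : Convex ℝ O
  exists_extend : ∀ p ∈ O, ∀ q ∈ O, ∃ ε > (0 : ℝ), p + ε • (p - q) ∈ O

namespace IsRelOpenConvex

variable {O : Set V} {p : V}

lemma coe_affineSubspace (Q : AffineSubspace ℝ V) : IsRelOpenConvex (Q : Set V) where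
  convex := Q.convex
  exists_extend p hp q hq := by
    refine ⟨1, one_pos, ?_⟩
    simpa only [vsub_eq_sub, vadd_eq_add, add_comm, SetLike.mem_coe] using
      Q.smul_vsub_vadd_mem 1 hp hq hp

lemma singleton (p : V) : IsRelOpenConvex {p} := by
  simpa only [AffineSubspace.coe_affineSpan_singleton] using coe_affineSubspace (affineSpan ℝ {p})

lemma preimage_add (hO : IsRelOpenConvex O) (v : V) (φ : U →ₗ[ℝ] V) :
    IsRelOpenConvex {u | v + φ u ∈ O} where
  convex := (hO.convex.translate_preimage_right v).linear_preimage φ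
  exists_extend p hp q hq := by
    obtain ⟨ε, hε, h⟩ := hO.exists_extend _ hp _ hq
    refine ⟨ε, hε, ?_⟩
    simpa only [mem_ofPred_eq, map_add, map_smul, map_sub, add_sub_add_left_eq_sub,
      add_assoc] using h

lemma image (hO : IsRelOpenConvex O) (L : V →ₗ[ℝ] W) : IsRelOpenConvex (L '' O) where
  convex := hO.convex.linear_image L
  exists_extend := by
    rintro _ ⟨p, hp, rfl⟩ _ ⟨q, hq, rfl⟩
    obtain ⟨ε, hε, h⟩ := hO.exists_extend p hp q hq
    exact ⟨ε, hε, _, h, by simp only [map_add, map_smul, map_sub]⟩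

lemma mem_vectorSpan_iff (hO : IsRelOpenConvex O) (hp : p ∈ O) {v : V} :
    v ∈ vectorSpan ℝ O ↔ ∃ s > (0 : ℝ), p + s • v ∈ O := by
  let S : Submodule ℝ V :=
    { carrier := {v | ∃ s > (0 : ℝ), p + s • v ∈ O}
      zero_mem' := ⟨1, one_pos, by simpa using hp⟩
      add_mem' := by
        rintro v w ⟨s, hs, hv⟩ ⟨t, ht, hw⟩
        refine ⟨s * t / (s + t), by positivity, ?_⟩
        convert hO.convex hv hw (a := t / (s + t)) (b := s / (s + t)) (by positivity)
          (by positivity) (by field_simp; ring) using 1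
        match_scalars <;> field_simp
        ring
      smul_mem' := by
        rintro a v ⟨s, hs, hv⟩
        rcases lt_trichotomy a 0 with ha | rfl | ha
        · obtain ⟨ε, hε, h⟩ := hO.exists_extend p hp _ hv
          refine ⟨ε * s / -a, div_pos (mul_pos hε hs) (neg_pos.2 ha), ?_⟩
          convert h using 2
          match_scalars <;> field_simp [ha.ne]
          ring
        · exact ⟨1, one_pos, by simpa using hp⟩
        · refine ⟨s / a, div_pos hs ha, ?_⟩
          rwa [smul_smul, div_mul_cancel₀ s ha.ne'] }
  have hspan : vectorSpan ℝ O ≤ S := by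
    rw [vectorSpan_eq_span_vsub_set_right ℝ hp, Submodule.span_le]
    rintro _ ⟨q, hq, rfl⟩
    exact ⟨1, one_pos, by simpa using hq⟩
  refine ⟨fun hv => hspan hv, fun ⟨s, hs, hv⟩ => ?_⟩
  have hsv := vsub_mem_vectorSpan ℝ hv hp
  rwa [vsub_eq_sub, add_sub_cancel_left, Submodule.smul_mem_iff _ hs.ne'] at hsv

lemma vectorSpan_preimage_add (hO : IsRelOpenConvex O) {v : V} {φ : U →ₗ[ℝ] V}
    (hne : {u | v + φ u ∈ O}.Nonempty) :
    vectorSpan ℝ {u | v + φ u ∈ O} = (vectorSpan ℝ O).comap φ := by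
  obtain ⟨u₀, hu₀⟩ := hne
  ext u
  rw [(hO.preimage_add v φ).mem_vectorSpan_iff hu₀, Submodule.mem_comap,
    hO.mem_vectorSpan_iff hu₀]
  simp only [mem_ofPred_eq, map_add, map_smul, add_assoc]

end IsRelOpenConvex

lemma finrank_comap_add_finrank_map_of_exact [FiniteDimensional ℝ V] {φ : U →ₗ[ℝ] V}
    {L : V →ₗ[ℝ] W} (hφ : Function.Injective φ) (hL : Function.Exact φ L) (M : Submodule ℝ V) :
    finrank ℝ (M.comap φ) + finrank ℝ (M.map L) = finrank ℝ M := by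
  have hker : (M.comap φ).map φ = (LinearMap.ker (L.domRestrict M)).map M.subtype := by
    rw [Submodule.map_comap_eq, LinearMap.ker_domRestrict, Submodule.map_comap_subtype,
      hL.linearMap_ker_eq, inf_comm]
  rw [(Submodule.equivMapOfInjective φ hφ _).finrank_eq, hker, Submodule.finrank_map_subtype_eq,
    ← LinearMap.range_domRestrict, add_comm, LinearMap.finrank_range_add_finrank_ker]

lemma IsRelOpenConvex.finrank_vectorSpan_preimage_add_image [FiniteDimensional ℝ V] {O : Set V}
    (hO : IsRelOpenConvex O) {φ : U →ₗ[ℝ] V} {L : V →ₗ[ℝ] W} (hφ : Function.Injective φ)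
    (hL : Function.Exact φ L) {v : V} (hne : {u | v + φ u ∈ O}.Nonempty) :
    finrank ℝ (vectorSpan ℝ {u | v + φ u ∈ O}) + finrank ℝ (vectorSpan ℝ (L '' O)) =
      finrank ℝ (vectorSpan ℝ O) := by
  have himage : vectorSpan ℝ (L '' O) = (vectorSpan ℝ O).map L :=
    (L.toAffineMap.map_vectorSpan).symm
  rw [hO.vectorSpan_preimage_add hne, himage, finrank_comap_add_finrank_map_of_exact hφ hL]

section Topology

variable [TopologicalSpace V] [IsTopologicalAddGroup V] [ContinuousSMul ℝ V]
  {O A : Set V}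

lemma exists_add_smul_mem_of_isOpen (hA : IsOpen A) {p : V} (hp : p ∈ A) (v : V) :
    ∃ r ∈ Ioc (0 : ℝ) 1, p + r • v ∈ A := by
  have hcont : ContinuousAt (fun r : ℝ => p + r • v) 0 := by fun_prop
  have hA0 : ∀ᶠ r in 𝓝[>] (0 : ℝ), p + r • v ∈ A :=
    (hcont.eventually_mem (hA.mem_nhds (by simpa using hp))).filter_mono nhdsWithin_le_nhds
  obtain ⟨r, hr, hr'⟩ := (hA0.and (Ioc_mem_nhdsGT one_pos)).exists
  exact ⟨r, hr', hr⟩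

lemma exists_add_smul_mem_inter_of_isOpen (hO : Convex ℝ O) (hA : IsOpen A) {p v : V}
    (hp : p ∈ O ∩ A) (hv : p + v ∈ O) : ∃ r > (0 : ℝ), p + r • v ∈ O ∩ A := by
  obtain ⟨r, hr, hrA⟩ := exists_add_smul_mem_of_isOpen hA hp.2 v
  exact ⟨r, hr.1, hO.add_smul_mem hp.1 hv (Ioc_subset_Icc_self hr), hrA⟩

lemma IsRelOpenConvex.inter_isOpen (hO : IsRelOpenConvex O) (hA : IsOpen A)
    (hconv : Convex ℝ A) : IsRelOpenConvex (O ∩ A) where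
  convex := hO.convex.inter hconv
  exists_extend p hp q hq := by
    obtain ⟨ε, hε, hεO⟩ := hO.exists_extend p hp.1 q hq.1
    obtain ⟨r, hr, hrOA⟩ := exists_add_smul_mem_inter_of_isOpen hO.convex hA hp hεO
    exact ⟨r * ε, mul_pos hr hε, by rwa [mul_smul]⟩

lemma IsRelOpenConvex.vectorSpan_inter_isOpen (hO : IsRelOpenConvex O) (hA : IsOpen A)
    (hne : (O ∩ A).Nonempty) : vectorSpan ℝ (O ∩ A) = vectorSpan ℝ O := by
  obtain ⟨p, hp⟩ := hne
  refine le_antisymm (vectorSpan_mono ℝ inter_subset_left) fun v hv => ?_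
  obtain ⟨s, hs, hsO⟩ := (hO.mem_vectorSpan_iff hp.1).1 hv
  obtain ⟨r, hr, hrOA⟩ := exists_add_smul_mem_inter_of_isOpen hO.convex hA hp hsO
  have hmem := vsub_mem_vectorSpan ℝ hrOA hp
  rwa [vsub_eq_sub, add_sub_cancel_left, Submodule.smul_mem_iff _ hr.ne',
    Submodule.smul_mem_iff _ hs.ne'] at hmem

end Topology

end RelOpenConvex

section EulerCharacteristic

variable {U V W : Type*} [AddCommGroup U] [Module ℝ U] [AddCommGroup V] [Module ℝ V]
  [AddCommGroup W] [Module ℝ W]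

/-- `HasEulerChar g c`: the function `g` is an integral combination of indicators of nonempty
relatively open convex sets `O`, and `c` is the corresponding combination of the signs
`(-1) ^ dim O`. That `c` depends on `g` only is `HasEulerChar.unique`. -/
inductive HasEulerChar : (V → ℤ) → ℤ → Prop
  | indicator {O : Set V} (hO : IsRelOpenConvex O) (hne : O.Nonempty) :
      HasEulerChar (O.indicator 1) ((-1) ^ finrank ℝ (vectorSpan ℝ O))
  | add {g₁ g₂ : V → ℤ} {c₁ c₂ : ℤ} (h₁ : HasEulerChar g₁ c₁) (h₂ : HasEulerChar g₂ c₂) :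
      HasEulerChar (g₁ + g₂) (c₁ + c₂)
  | zsmul {g : V → ℤ} {c : ℤ} (n : ℤ) (h : HasEulerChar g c) : HasEulerChar (n • g) (n • c)

namespace HasEulerChar

lemma zero : HasEulerChar (0 : V → ℤ) 0 := by
  simpa only [zero_smul] using
    (indicator (IsRelOpenConvex.singleton (0 : V)) (singleton_nonempty 0)).zsmul 0

lemma sub {g₁ g₂ : V → ℤ} {c₁ c₂ : ℤ} (h₁ : HasEulerChar g₁ c₁) (h₂ : HasEulerChar g₂ c₂) :
    HasEulerChar (g₁ - g₂) (c₁ - c₂) := by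
  simpa only [neg_one_smul, ← sub_eq_add_neg] using h₁.add (h₂.zsmul (-1))

lemma sum {κ : Type*} {s : Finset κ} {g : κ → V → ℤ} {c : κ → ℤ}
    (h : ∀ i ∈ s, HasEulerChar (g i) (c i)) : HasEulerChar (∑ i ∈ s, g i) (∑ i ∈ s, c i) := by
  induction s using Finset.induction_on with
  | empty => exact zero
  | insert i s hi ih =>
    rw [Finset.sum_insert hi, Finset.sum_insert hi]
    exact (h i (Finset.mem_insert_self i s)).add
      (ih fun j hj => h j (Finset.mem_insert_of_mem hj))

lemma union {A B : Set V} {a b : ℤ} (hA : HasEulerChar (A.indicator 1) a)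
    (hB : HasEulerChar (B.indicator 1) b) (hAB : Disjoint A B) :
    HasEulerChar ((A ∪ B).indicator 1) (a + b) := by
  rw [indicator_union_of_disjoint hAB]
  exact hA.add hB

lemma sdiff {A B : Set V} {a b : ℤ} (hA : HasEulerChar (A.indicator 1) a)
    (hB : HasEulerChar (B.indicator 1) b) (hBA : B ⊆ A) :
    HasEulerChar ((A \ B).indicator 1) (a - b) := by
  rw [indicator_sdiff hBA]
  exact hA.sub hB

lemma singleton (p : V) : HasEulerChar (({p} : Set V).indicator 1) 1 := by
  have h := indicator (IsRelOpenConvex.singleton p) (singleton_nonempty p)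
  rwa [vectorSpan_singleton, finrank_bot, pow_zero] at h

lemma of_isOpen [TopologicalSpace V] [IsTopologicalAddGroup V] [ContinuousSMul ℝ V] {A : Set V}
    (hA : IsOpen A) (hconv : Convex ℝ A) (hne : A.Nonempty) :
    HasEulerChar (A.indicator 1) ((-1) ^ finrank ℝ V) := by
  have huniv : IsRelOpenConvex (univ : Set V) := .coe_affineSubspace ⊤
  have hspan := huniv.vectorSpan_inter_isOpen hA (by rwa [univ_inter])
  have hA' := huniv.inter_isOpen hA hconv
  rw [univ_inter] at hspan hA'
  have h := indicator hA' hne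
  rwa [hspan, ← AffineSubspace.top_coe ℝ V V, ← AffineSubspace.direction_eq_vectorSpan,
    AffineSubspace.direction_top, finrank_top] at h

lemma exists_pushforward_indicator [FiniteDimensional ℝ V] {φ : U →ₗ[ℝ] V} {L : V →ₗ[ℝ] W}
    (hφ : Function.Injective φ) (hL : Function.Exact φ L) {O : Set V} (hO : IsRelOpenConvex O)
    (hne : O.Nonempty) :
    ∃ h : W → ℤ, HasEulerChar h ((-1) ^ finrank ℝ (vectorSpan ℝ O)) ∧
      ∀ v, HasEulerChar (fun u => O.indicator 1 (v + φ u)) (h (L v)) := by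
  set a := finrank ℝ (vectorSpan ℝ O)
  set b := finrank ℝ (vectorSpan ℝ (L '' O))
  refine ⟨(-1) ^ (a + b) • (L '' O).indicator 1, ?_, fun v => ?_⟩
  · have hsign : (-1 : ℤ) ^ (a + b) • (-1 : ℤ) ^ b = (-1) ^ a := by
      rw [smul_eq_mul, pow_add, mul_assoc, ← mul_pow, neg_one_mul, neg_neg, one_pow, mul_one]
    rw [← hsign]
    exact (indicator (hO.image L) (hne.image L)).zsmul _
  · by_cases hv : {u | v + φ u ∈ O}.Nonempty
    · have hmem : L v ∈ L '' O := by
        obtain ⟨u, hu⟩ := hv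
        exact ⟨_, hu, by rw [map_add, hL.apply_apply_eq_zero, add_zero]⟩
      have hsign : (-1 : ℤ) ^ (a + b) = (-1) ^ finrank ℝ (vectorSpan ℝ {u | v + φ u ∈ O}) := by
        have hdim : _ + b = a := hO.finrank_vectorSpan_preimage_add_image hφ hL hv
        rw [← hdim, add_assoc, pow_add, Even.neg_one_pow ⟨b, rfl⟩, mul_one]
      rw [Pi.smul_apply, indicator_of_mem hmem, Pi.one_apply, smul_eq_mul, mul_one, hsign]
      exact indicator (hO.preimage_add v φ) hv
    · have hmem : L v ∉ L '' O := by
        rintro ⟨p, hp, hpv⟩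
        obtain ⟨u, hu⟩ := (hL (p - v)).1 (by rw [map_sub, hpv, sub_self])
        exact hv ⟨u, by rwa [mem_ofPred_eq, hu, add_sub_cancel]⟩
      have hfib : (fun u => O.indicator 1 (v + φ u)) = (0 : U → ℤ) :=
        funext fun u => indicator_of_notMem (s := O) (fun hu => hv ⟨u, hu⟩) 1
      rw [Pi.smul_apply, indicator_of_notMem hmem, smul_zero, hfib]
      exact zero

/- Fubini's theorem: `h` is the integral of `g` along the fibres of `L`. -/
lemma exists_pushforward [FiniteDimensional ℝ V] {φ : U →ₗ[ℝ] V} {L : V →ₗ[ℝ] W}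
    (hφ : Function.Injective φ) (hL : Function.Exact φ L) {g : V → ℤ} {c : ℤ}
    (hg : HasEulerChar g c) :
    ∃ h : W → ℤ, HasEulerChar h c ∧ ∀ v, HasEulerChar (fun u => g (v + φ u)) (h (L v)) := by
  induction hg with
  | indicator hO hne => exact exists_pushforward_indicator hφ hL hO hne
  | add _ _ ih₁ ih₂ =>
    obtain ⟨h₁, hc₁, hfib₁⟩ := ih₁
    obtain ⟨h₂, hc₂, hfib₂⟩ := ih₂
    exact ⟨h₁ + h₂, hc₁.add hc₂, fun v => (hfib₁ v).add (hfib₂ v)⟩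
  | zsmul n _ ih =>
    obtain ⟨h, hc, hfib⟩ := ih
    exact ⟨n • h, hc.zsmul n, fun v => (hfib v).zsmul n⟩

end HasEulerChar

end EulerCharacteristic

section OneDimensional

variable {J : Set ℝ}

lemma eventually_nhdsGT_mem_of_ordConnected (hJ : J.OrdConnected) {t q : ℝ} (hq : q ∈ J)
    (htq : t < q) (ht : ∀ s > t, ∃ r ∈ J, r ≤ s) : ∀ᶠ s in 𝓝[>] t, s ∈ J := by
  filter_upwards [Ioc_mem_nhdsGT htq] with s hs
  obtain ⟨r, hr, hrs⟩ := ht s hs.1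
  exact hJ.out hr hq ⟨hrs, hs.2⟩

lemma eventually_nhdsGT_indicator_eq (hJ : J.OrdConnected) (hopen : IsOpen J) {r t : ℝ}
    (hr : r ∈ J) (hrt : r < t) :
    ∀ᶠ s in 𝓝[>] t, J.indicator (1 : ℝ → ℤ) t - J.indicator 1 s = 0 := by
  by_cases ht : t ∈ J
  · filter_upwards [nhdsWithin_le_nhds (hopen.mem_nhds ht)] with s hs
    rw [indicator_of_mem ht, indicator_of_mem hs, Pi.one_apply, Pi.one_apply, sub_self]
  · filter_upwards [self_mem_nhdsWithin] with s hs
    have hs' : s ∉ J := fun h => ht (hJ.out hr h ⟨hrt.le, le_of_lt hs⟩)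
    rw [indicator_of_notMem ht, indicator_of_notMem hs', sub_self]

lemma IsRelOpenConvex.isOpen_of_vectorSpan_eq_top (hJ : IsRelOpenConvex J)
    (htop : vectorSpan ℝ J = ⊤) : IsOpen J := by
  refine isOpen_iff_mem_nhds.2 fun p hp => ?_
  have hprolong (v : ℝ) : ∃ s > (0 : ℝ), p + s • v ∈ J :=
    (hJ.mem_vectorSpan_iff hp).1 (htop ▸ Submodule.mem_top)
  obtain ⟨s, hs, hsJ⟩ := hprolong (-1)
  obtain ⟨t, ht, htJ⟩ := hprolong 1
  rw [smul_eq_mul] at hsJ htJ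
  exact mem_of_superset (Icc_mem_nhds (by linarith) (by linarith))
    (hJ.convex.ordConnected.out hsJ htJ)

/-- `HasJumps g D m`: `D t` is the jump of `g` from the value at `t` to the values immediately to
the right of `t`, and `m` is the value of `g` near `-∞`. The quantity `D.degree - m` is then visibly
determined by `g`. -/
structure HasJumps (g : ℝ → ℤ) (D : ℝ →₀ ℤ) (m : ℤ) : Prop where
  nhdsGT : ∀ t, ∀ᶠ s in 𝓝[>] t, g t - g s = D t
  atBot : ∀ᶠ s in atBot, g s = m

lemma HasJumps.eq_zero {D : ℝ →₀ ℤ} {m : ℤ} (h : HasJumps 0 D m) : D = 0 ∧ m = 0 := by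
  refine ⟨Finsupp.ext fun t => ?_, ?_⟩
  · obtain ⟨s, hs⟩ := (h.nhdsGT t).exists
    exact hs.symm
  · obtain ⟨s, hs⟩ := h.atBot.exists
    exact hs.symm

lemma hasJumps_indicator_singleton (p : ℝ) :
    HasJumps (({p} : Set ℝ).indicator 1) (Finsupp.single p 1) 0 where
  nhdsGT t := by
    have hne : ∀ᶠ s in 𝓝[>] t, s ≠ p := by
      rcases eq_or_ne t p with rfl | htp
      · filter_upwards [self_mem_nhdsWithin] with s hs using ne_of_gt hs
      · exact nhdsWithin_le_nhds (isOpen_ne.mem_nhds htp)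
    filter_upwards [hne] with s hs
    rw [indicator_of_notMem (s := {p}) hs, sub_zero, Finsupp.single_apply]
    simp only [indicator_apply, mem_singleton_iff, Pi.one_apply, eq_comm]
  atBot := by
    filter_upwards [eventually_lt_atBot p] with s hs
    exact indicator_of_notMem (s := {p}) hs.ne 1

lemma hasJumps_indicator_of_bddBelow (hJ : J.OrdConnected) (hopen : IsOpen J)
    (hne : J.Nonempty) (hbdd : BddBelow J) :
    HasJumps (J.indicator 1) (Finsupp.single (sInf J) (-1)) 0 where
  nhdsGT t := by
    rcases lt_trichotomy t (sInf J) with ht | rfl | ht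
    · filter_upwards [nhdsWithin_le_nhds (Iio_mem_nhds ht)] with s hs
      rw [indicator_of_notMem (notMem_of_lt_csInf ht hbdd),
        indicator_of_notMem (notMem_of_lt_csInf hs hbdd), Finsupp.single_eq_of_ne ht.ne, sub_self]
    · have hinf : sInf J ∉ J := fun h => by
        obtain ⟨s, hs, hsJ⟩ := (hopen.eventually_mem h).exists_lt
        exact notMem_of_lt_csInf hs hbdd hsJ
      obtain ⟨q, hq⟩ := hne
      have hmem := eventually_nhdsGT_mem_of_ordConnected hJ hq
        ((csInf_le hbdd hq).lt_of_ne fun h => hinf (h ▸ hq)) fun s hs =>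
          (exists_lt_of_csInf_lt ⟨q, hq⟩ hs).imp fun _ h => ⟨h.1, h.2.le⟩
      filter_upwards [hmem] with s hs
      rw [indicator_of_notMem hinf, indicator_of_mem hs, Finsupp.single_eq_same, Pi.one_apply,
        zero_sub]
    · obtain ⟨r, hr, hrt⟩ := exists_lt_of_csInf_lt hne ht
      rw [Finsupp.single_eq_of_ne ht.ne']
      exact eventually_nhdsGT_indicator_eq hJ hopen hr hrt
  atBot := by
    filter_upwards [eventually_lt_atBot (sInf J)] with s hs
    exact indicator_of_notMem (notMem_of_lt_csInf hs hbdd) 1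

lemma hasJumps_indicator_of_not_bddBelow (hJ : J.OrdConnected) (hopen : IsOpen J)
    (hne : J.Nonempty) (hbdd : ¬ BddBelow J) : HasJumps (J.indicator 1) 0 1 where
  nhdsGT t := by
    obtain ⟨r, hr, hrt⟩ := not_bddBelow_iff.1 hbdd t
    exact eventually_nhdsGT_indicator_eq hJ hopen hr hrt
  atBot := by
    obtain ⟨q, hq⟩ := hne
    filter_upwards [eventually_le_atBot q] with s hs
    obtain ⟨r, hr, hrs⟩ := not_bddBelow_iff.1 hbdd s
    exact indicator_of_mem (hJ.out hr hq ⟨hrs.le, hs⟩) 1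

lemma IsRelOpenConvex.exists_hasJumps (hJ : IsRelOpenConvex J) (hne : J.Nonempty) :
    ∃ D m, HasJumps (J.indicator 1) D m ∧
      (-1) ^ finrank ℝ (vectorSpan ℝ J) = D.degree - m := by
  rcases eq_bot_or_eq_top (vectorSpan ℝ J) with hspan | hspan
  · obtain ⟨p, rfl⟩ := exists_eq_singleton_iff_nonempty_subsingleton.2
      ⟨hne, (vectorSpan_eq_bot_iff_subsingleton ℝ).1 hspan⟩
    refine ⟨_, _, hasJumps_indicator_singleton p, ?_⟩
    rw [hspan, finrank_bot, pow_zero, Finsupp.degree_single, sub_zero]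
  · have hopen := hJ.isOpen_of_vectorSpan_eq_top hspan
    rw [hspan, finrank_top, finrank_self, pow_one]
    by_cases hbdd : BddBelow J
    · refine ⟨_, _, hasJumps_indicator_of_bddBelow hJ.convex.ordConnected hopen hne hbdd, ?_⟩
      rw [Finsupp.degree_single, sub_zero]
    · refine ⟨_, _, hasJumps_indicator_of_not_bddBelow hJ.convex.ordConnected hopen hne hbdd, ?_⟩
      rw [map_zero, zero_sub]

lemma HasEulerChar.exists_hasJumps {g : ℝ → ℤ} {c : ℤ} (hg : HasEulerChar g c) :
    ∃ D m, HasJumps g D m ∧ c = D.degree - m := by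
  induction hg with
  | indicator hJ hne => exact hJ.exists_hasJumps hne
  | @add g₁ g₂ c₁ c₂ _ _ ih₁ ih₂ =>
    obtain ⟨D₁, m₁, h₁, rfl⟩ := ih₁
    obtain ⟨D₂, m₂, h₂, rfl⟩ := ih₂
    refine ⟨D₁ + D₂, m₁ + m₂, ⟨fun t => ?_, ?_⟩, by rw [map_add]; ring⟩
    · filter_upwards [h₁.nhdsGT t, h₂.nhdsGT t] with s hs₁ hs₂
      rw [Finsupp.add_apply, ← hs₁, ← hs₂, Pi.add_apply, Pi.add_apply]
      ring
    · filter_upwards [h₁.atBot, h₂.atBot] with s hs₁ hs₂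
      rw [Pi.add_apply, hs₁, hs₂]
  | @zsmul g c n _ ih =>
    obtain ⟨D, m, h, rfl⟩ := ih
    refine ⟨n • D, n • m, ⟨fun t => ?_, ?_⟩, by rw [map_zsmul, smul_sub]⟩
    · filter_upwards [h.nhdsGT t] with s hs
      rw [Finsupp.smul_apply, ← hs, Pi.smul_apply, Pi.smul_apply, smul_sub]
    · filter_upwards [h.atBot] with s hs
      rw [Pi.smul_apply, hs]

lemma HasEulerChar.eq_zero_of_real {c : ℤ} (hc : HasEulerChar (0 : ℝ → ℤ) c) : c = 0 := by
  obtain ⟨D, m, hjumps, rfl⟩ := hc.exists_hasJumps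
  obtain ⟨rfl, rfl⟩ := hjumps.eq_zero
  rw [map_zero, sub_zero]

end OneDimensional

section Uniqueness

variable {V : Type*} [AddCommGroup V] [Module ℝ V] [FiniteDimensional ℝ V]

namespace HasEulerChar

lemma eq_zero_of_finrank_eq_zero (hV : finrank ℝ V = 0) {g : V → ℤ} {c : ℤ}
    (hg : HasEulerChar g c) : c = g 0 := by
  have := finrank_zero_iff.1 hV
  induction hg with
  | @indicator O hO hne =>
    rw [vectorSpan_of_subsingleton ℝ O.subsingleton_of_subsingleton, finrank_bot, pow_zero,
      Subsingleton.eq_univ_of_nonempty hne, indicator_univ, Pi.one_apply]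
  | add _ _ ih₁ ih₂ => rw [ih₁, ih₂, Pi.add_apply]
  | zsmul n _ ih => rw [ih, Pi.smul_apply]

end HasEulerChar

lemma exists_dual_finrank_ker {n : ℕ} (hV : finrank ℝ V = n + 1) :
    ∃ ℓ : Dual ℝ V, Function.Surjective ℓ ∧ finrank ℝ (LinearMap.ker ℓ) = n := by
  have : Nontrivial V := nontrivial_of_finrank_eq_succ hV
  obtain ⟨v, hv⟩ := exists_ne (0 : V)
  obtain ⟨ℓ, hℓ⟩ : ∃ ℓ : Dual ℝ V, ℓ v ≠ 0 := by
    simpa only [not_forall] using mt (forall_dual_apply_eq_zero_iff ℝ v).1 hv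
  have hℓ0 : ℓ ≠ 0 := fun h => hℓ (by rw [h, LinearMap.zero_apply])
  refine ⟨ℓ, LinearMap.surjective hℓ0, ?_⟩
  have := Dual.finrank_ker_add_one_of_ne_zero hℓ0
  omega

lemma HasEulerChar.exists_pushforward_dual {g : V → ℤ} {c : ℤ} (hg : HasEulerChar g c)
    (ℓ : Dual ℝ V) :
    ∃ h : ℝ → ℤ, HasEulerChar h c ∧
      ∀ v, HasEulerChar (fun u : LinearMap.ker ℓ => g (v + u)) (h (ℓ v)) :=
  hg.exists_pushforward (Submodule.subtype_injective _) (LinearMap.exact_subtype_ker_map ℓ)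

end Uniqueness

namespace HasEulerChar

theorem eq_zero {V : Type*} [AddCommGroup V] [Module ℝ V] [FiniteDimensional ℝ V] {c : ℤ}
    (hc : HasEulerChar (0 : V → ℤ) c) : c = 0 := by
  induction hn : finrank ℝ V generalizing V c with
  | zero => exact hc.eq_zero_of_finrank_eq_zero hn
  | succ n ih =>
    obtain ⟨ℓ, hsurj, hker⟩ := exists_dual_finrank_ker hn
    obtain ⟨h, hh, hfib⟩ := hc.exists_pushforward_dual ℓ
    have h0 : h = 0 := funext fun t => by
      obtain ⟨v, rfl⟩ := hsurj t
      exact ih (hfib v) hker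
    exact eq_zero_of_real (h0 ▸ hh)

theorem unique {V : Type*} [AddCommGroup V] [Module ℝ V] [FiniteDimensional ℝ V] {g : V → ℤ}
    {b c : ℤ} (hb : HasEulerChar g b) (hc : HasEulerChar g c) : b = c :=
  sub_eq_zero.1 (eq_zero (V := V) (by simpa only [sub_self] using hb.sub hc))

lemma Ici (a : ℝ) : HasEulerChar ((Set.Ici a).indicator 1) 0 := by
  have h := (singleton a).union (of_isOpen isOpen_Ioi (convex_Ioi a) nonempty_Ioi)
    (disjoint_singleton_left.2 self_notMem_Ioi)
  rwa [singleton_union, Ioi_insert, finrank_self, pow_one, add_neg_cancel] at h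

lemma Icc {a b : ℝ} (hab : a ≤ b) : HasEulerChar ((Set.Icc a b).indicator 1) 1 := by
  have h := (Ici a).sdiff (of_isOpen isOpen_Ioi (convex_Ioi b) nonempty_Ioi)
    (Ioi_subset_Ici hab)
  rwa [Ici_sdiff_Ioi, finrank_self, pow_one, zero_sub, neg_neg] at h

theorem eq_one_of_isCompact {V : Type*} [NormedAddCommGroup V] [NormedSpace ℝ V]
    [FiniteDimensional ℝ V] {K : Set V} {c : ℤ} (hK : IsCompact K) (hconv : Convex ℝ K)
    (hne : K.Nonempty) (hc : HasEulerChar (K.indicator 1) c) : c = 1 := by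
  induction hn : finrank ℝ V generalizing V c with
  | zero =>
    have := finrank_zero_iff.1 hn
    rw [hc.eq_zero_of_finrank_eq_zero hn, Subsingleton.eq_univ_of_nonempty hne, indicator_univ,
      Pi.one_apply]
  | succ n ih =>
    obtain ⟨ℓ, hsurj, hker⟩ := exists_dual_finrank_ker hn
    obtain ⟨h, hh, hfib⟩ := hc.exists_pushforward_dual ℓ
    have hcont : Continuous ℓ := ℓ.continuous_of_finiteDimensional
    have h1 : h = (ℓ '' K).indicator 1 := funext fun t => by
      by_cases ht : t ∈ ℓ '' K
      · obtain ⟨v, hv, rfl⟩ := ht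
        have hcomp : IsCompact {u : LinearMap.ker ℓ | v + u ∈ K} :=
          ((Homeomorph.addLeft v).isClosedEmbedding.comp
            ℓ.ker.closed_of_finiteDimensional.isClosedEmbedding_subtypeVal).isCompact_preimage hK
        rw [indicator_of_mem (mem_image_of_mem ℓ hv), Pi.one_apply]
        exact ih hcomp ((hconv.translate_preimage_right v).linear_preimage (Submodule.subtype _))
          ⟨0, by simpa using hv⟩ (hfib v) hker
      · obtain ⟨v, rfl⟩ := hsurj t
        have hempty : (fun u : LinearMap.ker ℓ => K.indicator (1 : V → ℤ) (v + u)) = 0 :=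
          funext fun u => indicator_of_notMem (fun hu => ht ⟨v + u, hu, by simp⟩) 1
        rw [indicator_of_notMem ht]
        exact eq_zero (hempty ▸ hfib v)
    have hIcc : ℓ '' K = Set.Icc (sInf (ℓ '' K)) (sSup (ℓ '' K)) :=
      eq_Icc_of_connected_compact (hconv.linear_image ℓ |>.isConnected (hne.image ℓ))
        (hK.image hcont)
    have hle : sInf (ℓ '' K) ≤ sSup (ℓ '' K) := nonempty_Icc.1 (hIcc ▸ hne.image ℓ)
    exact hh.unique (by rw [h1, hIcc]; exact Icc hle)

theorem eq_zero_of_ray {V : Type*} [AddCommGroup V] [Module ℝ V] [FiniteDimensional ℝ V]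
    [TopologicalSpace V] [ContinuousAdd V] [ContinuousSMul ℝ V] {Y : Set V} {c : ℤ}
    (hY : IsClosed Y) {b : V} (hray : ∀ v ∈ Y, ∀ t : ℝ, 0 ≤ t → v + t • b ∈ Y) {ℓ : Dual ℝ V}
    (hb : 0 < ℓ b) (hbdd : BddBelow (ℓ '' Y)) (hc : HasEulerChar (Y.indicator 1) c) : c = 0 := by
  have hinj : Function.Injective (LinearMap.toSpanSingleton ℝ V b) := by
    rw [← LinearMap.ker_eq_bot]
    exact LinearMap.ker_toSpanSingleton ℝ fun h => hb.ne' (by rw [h, map_zero])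
  have hexact : Function.Exact (LinearMap.toSpanSingleton ℝ V b) (Submodule.span ℝ {b}).mkQ := by
    rw [LinearMap.exact_iff, Submodule.ker_mkQ, LinearMap.range_toSpanSingleton]
  obtain ⟨h, hh, hfib⟩ := hc.exists_pushforward hinj hexact
  suffices h = 0 from eq_zero (this ▸ hh)
  refine funext fun w => ?_
  obtain ⟨v, rfl⟩ := Submodule.mkQ_surjective _ w
  set T : Set ℝ := {t | v + t • b ∈ Y}
  have hT : HasEulerChar (T.indicator 1) (h ((Submodule.span ℝ {b}).mkQ v)) := hfib v
  rcases T.eq_empty_or_nonempty with hempty | hne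
  · rw [hempty, indicator_empty] at hT
    exact eq_zero hT
  · have hTclosed : IsClosed T := hY.preimage (by fun_prop)
    have hTbdd : BddBelow T := by
      obtain ⟨m, hm⟩ := hbdd
      refine ⟨(m - ℓ v) / ℓ b, fun t ht => ?_⟩
      have := hm (mem_image_of_mem ℓ ht)
      rw [map_add, map_smul, smul_eq_mul] at this
      rw [div_le_iff₀ hb]
      linarith
    have hTIci : T = Set.Ici (sInf T) := by
      refine Subset.antisymm (fun t ht => csInf_le hTbdd ht) fun t ht => ?_
      have := hray _ (hTclosed.csInf_mem hne hTbdd) (t - sInf T) (sub_nonneg.2 ht)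
      rwa [add_assoc, ← add_smul, add_sub_cancel] at this
    exact hT.unique (hTIci ▸ Ici _)

end HasEulerChar

section Polyhedra

variable {V : Type*} [NormedAddCommGroup V] [InnerProductSpace ℝ V] {ι : Type*}

/-- The polyhedron cut out by the inequalities `⟪p, y i⟫ ≤ c i` with `i ∈ A`. -/
def polyhedron (y : ι → V) (c : ι → ℝ) (A : Finset ι) : Set V := {p | ∀ i ∈ A, ⟪p, y i⟫ ≤ c i}

/-- The face of `polyhedron y c A` on which the inequalities with index in `I` are equalities. -/
def face (y : ι → V) (c : ι → ℝ) (A I : Finset ι) : Set V :=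
  {p ∈ polyhedron y c A | ∀ i ∈ I, ⟪p, y i⟫ = c i}

/-- The cell of points of `polyhedron y c A` at which, among the inequalities with index in `A`,
exactly those with index in `I` are equalities. The nonempty cells are the relative interiors of
the nonempty faces. -/
def cell (y : ι → V) (c : ι → ℝ) (A I : Finset ι) : Set V :=
  {p | (∀ i ∈ I, ⟪p, y i⟫ = c i) ∧ ∀ i ∈ A, i ∉ I → ⟪p, y i⟫ < c i}

/-- The index sets of the nonempty cells of `polyhedron y c A`; they index its nonempty faces. -/
def strata (y : ι → V) (c : ι → ℝ) (A : Finset ι) : Finset (Finset ι) :=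
  {I ∈ A.powerset | (cell y c A I).Nonempty}

/-- The indices of the inequalities of `polyhedron y c A` that are equalities at `p`. -/
def activeSet (y : ι → V) (c : ι → ℝ) (A : Finset ι) (p : V) : Finset ι := {i ∈ A | ⟪p, y i⟫ = c i}

/-- The orthogonal complement of the vectors `y i` with `i ∈ I`: the direction space of the face
and of the cell with index set `I`. -/
def direction (y : ι → V) (I : Finset ι) : Submodule ℝ V where
  carrier := {v | ∀ i ∈ I, ⟪v, y i⟫ = 0}
  zero_mem' _ _ := inner_zero_left _
  add_mem' hv hw i hi := by rw [inner_add_left, hv i hi, hw i hi, add_zero]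
  smul_mem' a v hv i hi := by rw [real_inner_smul_left, hv i hi, mul_zero]

variable {y : ι → V} {c : ι → ℝ} {A I : Finset ι} {p q f n : V}

lemma mem_activeSet {i : ι} : i ∈ activeSet y c A p ↔ i ∈ A ∧ ⟪p, y i⟫ = c i := Finset.mem_filter

lemma activeSet_subset : activeSet y c A p ⊆ A := Finset.filter_subset _ _

lemma mem_strata : I ∈ strata y c A ↔ I ⊆ A ∧ (cell y c A I).Nonempty := by
  rw [strata, Finset.mem_filter, Finset.mem_powerset]

lemma cell_subset_face : cell y c A I ⊆ face y c A I := fun _ hp =>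
  ⟨fun i hi => if h : i ∈ I then (hp.1 i h).le else (hp.2 i hi h).le, hp.1⟩

lemma face_nonempty_of_mem_strata (hI : I ∈ strata y c A) : (face y c A I).Nonempty :=
  (mem_strata.1 hI).2.mono cell_subset_face

lemma mem_cell_iff (hI : I ⊆ A) :
    p ∈ cell y c A I ↔ p ∈ polyhedron y c A ∧ activeSet y c A p = I := by
  constructor
  · intro hp
    refine ⟨(cell_subset_face hp).1, Finset.ext fun i => mem_activeSet.trans ⟨fun hi => ?_,
      fun hi => ⟨hI hi, hp.1 i hi⟩⟩⟩
    by_contra h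
    exact (hp.2 i hi.1 h).ne hi.2
  · rintro ⟨hp, rfl⟩
    exact ⟨fun i hi => (mem_activeSet.1 hi).2,
      fun i hi h => (hp i hi).lt_of_ne fun heq => h (mem_activeSet.2 ⟨hi, heq⟩)⟩

lemma mem_cell_activeSet (hp : p ∈ polyhedron y c A) : p ∈ cell y c A (activeSet y c A p) :=
  (mem_cell_iff activeSet_subset).2 ⟨hp, rfl⟩

lemma activeSet_mem_strata (hp : p ∈ polyhedron y c A) : activeSet y c A p ∈ strata y c A :=
  mem_strata.2 ⟨activeSet_subset, p, mem_cell_activeSet hp⟩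

lemma subset_activeSet_of_mem_face (hI : I ⊆ A) (hp : p ∈ face y c A I) :
    I ⊆ activeSet y c A p := fun i hi => mem_activeSet.2 ⟨hI hi, hp.2 i hi⟩

lemma face_injOn_strata : InjOn (face y c A) (strata y c A) := by
  have hsub {I J : Finset ι} (hI : I ∈ strata y c A) (hJ : J ∈ strata y c A)
      (h : face y c A I = face y c A J) : J ⊆ I := by
    obtain ⟨p, hp⟩ := (mem_strata.1 hI).2
    rw [← ((mem_cell_iff (mem_strata.1 hI).1).1 hp).2]
    exact subset_activeSet_of_mem_face (mem_strata.1 hJ).1 (h ▸ cell_subset_face hp)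
  exact fun I hI J hJ h => (hsub hJ hI h.symm).antisymm (hsub hI hJ h)

lemma convex_polyhedron : Convex ℝ (polyhedron y c A) := by
  simp only [polyhedron, ofPred_forall]
  exact convex_iInter₂ fun i _ => convex_halfSpace_le (innerₛₗ ℝ |>.flip (y i)).isLinear _

lemma isClosed_polyhedron : IsClosed (polyhedron y c A) := by
  simp only [polyhedron, ofPred_forall]
  exact isClosed_biInter fun i _ => isClosed_le (by fun_prop) continuous_const

lemma convex_face : Convex ℝ (face y c A I) := by
  have hslice : Convex ℝ {p : V | ∀ i ∈ I, ⟪p, y i⟫ = c i} := by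
    simp only [ofPred_forall]
    exact convex_iInter₂ fun i _ => convex_hyperplane (innerₛₗ ℝ |>.flip (y i)).isLinear _
  exact convex_polyhedron.inter hslice

lemma isClosed_face : IsClosed (face y c A I) := by
  have hslice : IsClosed {p : V | ∀ i ∈ I, ⟪p, y i⟫ = c i} := by
    simp only [ofPred_forall]
    exact isClosed_biInter fun i _ => isClosed_eq (by fun_prop) continuous_const
  exact isClosed_polyhedron.inter hslice

lemma isOpen_forall_inner_lt : IsOpen {p : V | ∀ i ∈ A, i ∉ I → ⟪p, y i⟫ < c i} := by
  simp only [← and_imp, ← Finset.mem_sdiff, ofPred_forall]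
  exact isOpen_biInter_finset fun i _ => isOpen_lt (by fun_prop) continuous_const

lemma convex_forall_inner_lt : Convex ℝ {p : V | ∀ i ∈ A, i ∉ I → ⟪p, y i⟫ < c i} := by
  simp only [ofPred_forall]
  exact convex_iInter₂ fun i _ => convex_iInter fun _ =>
    convex_halfSpace_lt (innerₛₗ ℝ |>.flip (y i)).isLinear _

lemma sub_mem_direction_iff (hp : ∀ i ∈ I, ⟪p, y i⟫ = c i) :
    q - p ∈ direction y I ↔ ∀ i ∈ I, ⟪q, y i⟫ = c i :=
  forall₂_congr fun i hi => by rw [inner_sub_left, hp i hi, sub_eq_zero]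

lemma cell_eq_inter (hp : p ∈ cell y c A I) :
    cell y c A I = (AffineSubspace.mk' p (direction y I) : Set V) ∩
      {q | ∀ i ∈ A, i ∉ I → ⟪q, y i⟫ < c i} := by
  ext q
  rw [mem_inter_iff, SetLike.mem_coe, AffineSubspace.mem_mk', vsub_eq_sub,
    sub_mem_direction_iff hp.1]
  rfl

lemma isRelOpenConvex_cell (hne : (cell y c A I).Nonempty) : IsRelOpenConvex (cell y c A I) := by
  obtain ⟨p, hp⟩ := hne
  rw [cell_eq_inter hp]
  exact (IsRelOpenConvex.coe_affineSubspace _).inter_isOpen isOpen_forall_inner_lt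
    convex_forall_inner_lt

lemma vectorSpan_cell (hne : (cell y c A I).Nonempty) :
    vectorSpan ℝ (cell y c A I) = direction y I := by
  obtain ⟨p, hp⟩ := hne
  rw [cell_eq_inter hp, (IsRelOpenConvex.coe_affineSubspace _).vectorSpan_inter_isOpen
    isOpen_forall_inner_lt ⟨p, cell_eq_inter hp ▸ hp⟩, ← AffineSubspace.direction_eq_vectorSpan,
    AffineSubspace.direction_mk']

lemma vectorSpan_face (hne : (cell y c A I).Nonempty) :
    vectorSpan ℝ (face y c A I) = direction y I := by
  refine le_antisymm ?_ ((vectorSpan_cell hne).ge.trans (vectorSpan_mono ℝ cell_subset_face))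
  rw [vectorSpan_def, Submodule.span_le]
  rintro _ ⟨p, hp, q, hq, rfl⟩
  exact (sub_mem_direction_iff hq.2).2 hp.2

lemma indicator_polyhedron_inter (B : Set V) :
    (polyhedron y c A ∩ B).indicator (1 : V → ℤ) =
      ∑ I ∈ A.powerset, (cell y c A I ∩ B).indicator 1 := by
  ext p
  have hterm : ∀ I ∈ A.powerset, (cell y c A I ∩ B).indicator (1 : V → ℤ) p =
      if activeSet y c A p = I then (polyhedron y c A ∩ B).indicator 1 p else 0 := by
    intro I hI
    simp only [indicator_apply, mem_inter_iff, mem_cell_iff (Finset.mem_powerset.1 hI)]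
    split_ifs <;> tauto
  rw [Finset.sum_apply, Finset.sum_congr rfl hterm, Finset.sum_ite_eq,
    if_pos (Finset.mem_powerset.2 activeSet_subset)]

lemma hasEulerChar_polyhedron_inter {B : Set V} (hB : IsOpen B) (hconv : Convex ℝ B) :
    HasEulerChar ((polyhedron y c A ∩ B).indicator 1)
      (∑ I ∈ A.powerset with (cell y c A I ∩ B).Nonempty, (-1) ^ finrank ℝ (direction y I)) := by
  rw [indicator_polyhedron_inter, Finset.sum_filter]
  refine HasEulerChar.sum fun I _ => ?_
  split_ifs with hne
  · have hcell := isRelOpenConvex_cell hne.left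
    rw [← vectorSpan_cell hne.left, ← hcell.vectorSpan_inter_isOpen hB hne]
    exact .indicator (hcell.inter_isOpen hB hconv) hne
  · rw [not_nonempty_iff_eq_empty.1 hne, indicator_empty]
    exact .zero

lemma hasEulerChar_polyhedron : HasEulerChar ((polyhedron y c A).indicator 1)
    (∑ I ∈ strata y c A, (-1) ^ finrank ℝ (direction y I)) := by
  simpa only [inter_univ, strata] using hasEulerChar_polyhedron_inter isOpen_univ convex_univ

theorem sum_strata_eq_one [FiniteDimensional ℝ V] (hcomp : IsCompact (polyhedron y c A))
    (hne : (polyhedron y c A).Nonempty) :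
    ∑ I ∈ strata y c A, (-1 : ℤ) ^ finrank ℝ (direction y I) = 1 :=
  hasEulerChar_polyhedron.eq_one_of_isCompact hcomp convex_polyhedron hne

/- Removing the open half-space `⟪n, ·⟫ < 0` from the cone leaves a closed set that contains, with
each point, the whole ray in direction `q`, so its Euler characteristic vanishes. -/
theorem sum_strata_cone_eq_zero [FiniteDimensional ℝ V] (hq : q ∈ polyhedron y 0 A)
    (hnq : 0 < ⟪n, q⟫) :
    ∑ I ∈ strata y 0 A with ∀ v ∈ cell y 0 A I, 0 ≤ ⟪n, v⟫,
      (-1 : ℤ) ^ finrank ℝ (direction y I) = 0 := by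
  set H : Set V := {v | ⟪n, v⟫ < 0}
  have hH : HasEulerChar ((polyhedron y 0 A ∩ H).indicator 1)
      (∑ I ∈ A.powerset with (cell y 0 A I ∩ H).Nonempty, (-1) ^ finrank ℝ (direction y I)) :=
    hasEulerChar_polyhedron_inter (isOpen_lt (by fun_prop) continuous_const)
      (convex_halfSpace_lt (innerₛₗ ℝ n).isLinear 0)
  have hfilter : {I ∈ A.powerset | (cell y 0 A I ∩ H).Nonempty} =
      {I ∈ strata y 0 A | ¬ ∀ v ∈ cell y 0 A I, 0 ≤ ⟪n, v⟫} := by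
    rw [strata, Finset.filter_filter]
    refine Finset.filter_congr fun I _ => ?_
    push Not
    exact ⟨fun h => ⟨h.left, h⟩, And.right⟩
  have hdiff : polyhedron y 0 A \ (polyhedron y 0 A ∩ H) =
      polyhedron y 0 A ∩ {v | 0 ≤ ⟪n, v⟫} := by
    rw [sdiff_self_inter]
    ext
    simp [H]
  have hχ := hasEulerChar_polyhedron.sdiff hH inter_subset_left
  rw [hfilter, ← Finset.sum_filter_add_sum_filter_not (strata y 0 A)
    (fun I => ∀ v ∈ cell y 0 A I, 0 ≤ ⟪n, v⟫), add_sub_cancel_right, hdiff] at hχ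
  have hclosed : IsClosed (polyhedron y 0 A ∩ {v | 0 ≤ ⟪n, v⟫}) :=
    isClosed_polyhedron.inter (isClosed_le continuous_const (by fun_prop))
  refine hχ.eq_zero_of_ray hclosed (b := q) (ℓ := innerₛₗ ℝ n) ?_ hnq
    ⟨0, by rintro _ ⟨v, hv, rfl⟩; exact hv.2⟩
  rintro v ⟨hv, hnv⟩ t ht
  refine ⟨fun i hi => ?_, ?_⟩
  · rw [inner_add_left, real_inner_smul_left]
    exact add_nonpos (hv i hi) (mul_nonpos_of_nonneg_of_nonpos ht (hq i hi))
  · rw [mem_ofPred_eq, inner_add_right, real_inner_smul_right]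
    exact add_nonneg hnv (mul_nonneg ht hnq.le)

/- `polyhedron y 0 (activeSet y c A f)` is the tangent cone of `polyhedron y c A` at `f`. -/
lemma sub_mem_polyhedron_activeSet (hp : p ∈ polyhedron y c A) :
    p - f ∈ polyhedron y 0 (activeSet y c A f) := fun i hi => by
  obtain ⟨hiA, hif⟩ := mem_activeSet.1 hi
  rw [inner_sub_left, hif]
  exact sub_nonpos.2 (hp i hiA)

lemma sub_add_mem_cell_activeSet {v : V} (hf : f ∈ face y c A I) (hq : q ∈ face y c A I)
    (hv : v ∈ cell y 0 (activeSet y c A f) I) :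
    q - f + v ∈ cell y 0 (activeSet y c A f) I := by
  refine ⟨fun i hi => ?_, fun i hi hiI => ?_⟩ <;> rw [inner_add_left]
  · rw [(sub_mem_direction_iff hf.2).2 hq.2 i hi, hv.1 i hi]
    exact add_zero 0
  · exact add_neg_of_nonpos_of_neg (sub_mem_polyhedron_activeSet hq.1 i hi) (hv.2 i hi hiI)

lemma smul_mem_cell_zero {v : V} (hv : v ∈ cell y 0 A I) {s : ℝ} (hs : 0 < s) :
    s • v ∈ cell y 0 A I := by
  refine ⟨fun i hi => ?_, fun i hi hiI => ?_⟩ <;> rw [real_inner_smul_left]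
  · rw [hv.1 i hi]
    exact mul_zero s
  · exact mul_neg_of_pos_of_neg hs (hv.2 i hi hiI)

lemma sub_mem_cell_activeSet (hf : f ∈ face y c A I) (hp : p ∈ cell y c A I) :
    p - f ∈ cell y 0 (activeSet y c A f) I := by
  refine ⟨(sub_mem_direction_iff hf.2).2 hp.1, fun i hi hiI => ?_⟩
  obtain ⟨hiA, hif⟩ := mem_activeSet.1 hi
  rw [inner_sub_left, hif]
  exact sub_neg.2 (hp.2 i hiA hiI)

lemma exists_add_smul_mem_cell {v : V} (hf : f ∈ polyhedron y c A) (hI : I ⊆ activeSet y c A f)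
    (hv : v ∈ cell y 0 (activeSet y c A f) I) : ∃ r > (0 : ℝ), f + r • v ∈ cell y c A I := by
  obtain ⟨r, hr, hstrict⟩ := exists_add_smul_mem_of_isOpen
    (isOpen_forall_inner_lt (y := y) (c := c)) (mem_cell_activeSet hf).2 v
  have hrv := smul_mem_cell_zero hv hr.1
  refine ⟨r, hr.1, fun i hi => ?_, fun i hi hiI => ?_⟩
  · rw [inner_add_left, (mem_activeSet.1 (hI hi)).2, hrv.1 i hi]
    exact add_zero _
  · by_cases hif : i ∈ activeSet y c A f
    · rw [inner_add_left, (mem_activeSet.1 hif).2]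
      exact add_lt_of_neg_right _ (hrv.2 i hif hiI)
    · exact hstrict i hi hif

lemma nonneg_of_forall_pos_add_mul_nonneg {a b : ℝ} (h : ∀ s > 0, 0 ≤ a + s * b) : 0 ≤ a := by
  have hlim : Tendsto (fun s => a + s * b) (𝓝[>] 0) (𝓝 (a + 0 * b)) :=
    (Continuous.tendsto (by fun_prop) 0).mono_left nhdsWithin_le_nhds
  rw [zero_mul, add_zero] at hlim
  exact ge_of_tendsto hlim (by filter_upwards [self_mem_nhdsWithin] with s hs using h s hs)

lemma mem_strata_activeSet_iff (hf : f ∈ polyhedron y c A) :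
    (I ∈ strata y c A ∧ f ∈ face y c A I ∧ ∀ q ∈ face y c A I, 0 ≤ ⟪n, q - f⟫) ↔
      I ∈ strata y 0 (activeSet y c A f) ∧
        ∀ v ∈ cell y 0 (activeSet y c A f) I, 0 ≤ ⟪n, v⟫ := by
  simp only [mem_strata]
  constructor
  · rintro ⟨⟨hI, p, hp⟩, hfI, hmin⟩
    have hIf := subset_activeSet_of_mem_face hI hfI
    refine ⟨⟨hIf, p - f, sub_mem_cell_activeSet hfI hp⟩, fun v hv => ?_⟩
    obtain ⟨r, hr, hrv⟩ := exists_add_smul_mem_cell hf hIf hv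
    have hpos := hmin _ (cell_subset_face hrv)
    rw [add_sub_cancel_left, real_inner_smul_right] at hpos
    exact nonneg_of_mul_nonneg_right hpos hr
  · rintro ⟨⟨hIf, v, hv⟩, hpos⟩
    obtain ⟨r, -, hrv⟩ := exists_add_smul_mem_cell hf hIf hv
    have hfI : f ∈ face y c A I := ⟨hf, fun i hi => (mem_activeSet.1 (hIf hi)).2⟩
    refine ⟨⟨hIf.trans activeSet_subset, _, hrv⟩, hfI, fun q hq => ?_⟩
    refine nonneg_of_forall_pos_add_mul_nonneg (b := ⟪n, v⟫) fun s hs => ?_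
    rw [← real_inner_smul_right, ← inner_add_right]
    exact hpos _ (sub_add_mem_cell_activeSet hfI hq (smul_mem_cell_zero hv hs))

/- The faces on which `⟪n, ·⟫` is minimal at `f` are the faces of the tangent cone at `f` contained
in the half-space `0 ≤ ⟪n, ·⟫`. -/
theorem sum_strata_minimal_eq_zero [FiniteDimensional ℝ V] (hf : f ∈ polyhedron y c A)
    (hq : q ∈ polyhedron y c A) (hnq : 0 < ⟪n, q - f⟫) :
    ∑ I ∈ strata y c A with f ∈ face y c A I ∧ ∀ g ∈ face y c A I, 0 ≤ ⟪n, g - f⟫,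
      (-1 : ℤ) ^ finrank ℝ (direction y I) = 0 := by
  rw [← sum_strata_cone_eq_zero (sub_mem_polyhedron_activeSet hq) hnq]
  refine Finset.sum_congr (Finset.ext fun I => ?_) fun _ _ => rfl
  rw [Finset.mem_filter, Finset.mem_filter, mem_strata_activeSet_iff hf]

end Polyhedra

section Faces

lemma exists_extend_of_mem_intrinsicInterior {V : Type*} [NormedAddCommGroup V] [NormedSpace ℝ V]
    {F : Set V} {f g : V} (hf : f ∈ intrinsicInterior ℝ F) (hg : g ∈ F) :
    ∃ ε > (0 : ℝ), f + ε • (f - g) ∈ F := by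
  obtain ⟨w, hw, rfl⟩ := mem_intrinsicInterior.1 hf
  obtain ⟨B, hBF, hB, hwB⟩ : ∃ B ⊆ {p | p ∈ affineSpan ℝ F → p ∈ F}, IsOpen B ∧ ↑w ∈ B := by
    obtain ⟨B, hB, hBint⟩ := isOpen_induced_iff.1
      (isOpen_interior (s := ((↑) ⁻¹' F : Set (affineSpan ℝ F))))
    refine ⟨B, fun p hp h => ?_, hB, by rwa [← hBint] at hw⟩
    have hint : (⟨p, h⟩ : affineSpan ℝ F) ∈ interior (Subtype.val ⁻¹' F) := hBint.subset hp
    exact mem_preimage.1 (interior_subset hint)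
  obtain ⟨ε, hε, hεB⟩ := exists_add_smul_mem_of_isOpen hB hwB (w - g)
  have hspan : (w : V) + ε • ((w : V) - g) ∈ affineSpan ℝ F := by
    rw [add_comm]
    exact (affineSpan ℝ F).smul_vsub_vadd_mem ε w.2 (subset_affineSpan ℝ F hg) w.2
  exact ⟨ε, hε.1, hBF hεB hspan⟩

variable {P F : Set (E d)} {x f z : E d}

lemma mem_normalCone_iff (hFP : F ⊆ P) (hF : Convex ℝ F) (hne : F.Nonempty) :
    z ∈ normalCone P F ↔ ∀ g ∈ F, ∀ p ∈ P, ⟪z, p - g⟫ ≤ 0 := by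
  constructor
  · intro hz g hg p hp
    obtain ⟨f₀, hf₀⟩ := hne.intrinsicInterior hF
    obtain ⟨ε, hε, hext⟩ := exists_extend_of_mem_intrinsicInterior hf₀ hg
    have hp' := hz f₀ hf₀ (p - f₀) ⟨1, one_pos, by rwa [one_smul, add_sub_cancel]⟩
    have hg' := hz f₀ hf₀ (f₀ - g) ⟨ε, hε, hFP hext⟩
    rw [← sub_add_sub_cancel p f₀ g, inner_add_right]
    exact add_nonpos hp' hg'
  · rintro hz f₀ hf₀ u ⟨δ, hδ, hu⟩
    have hδu := hz f₀ (intrinsicInterior_subset hf₀) _ hu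
    rw [add_sub_cancel_left, real_inner_smul_right] at hδu
    exact nonpos_of_mul_nonpos_right hδu hδ

lemma isNearestPt_iff (hF : Convex ℝ F) :
    IsNearestPt F x f ↔ f ∈ F ∧ ∀ g ∈ F, 0 ≤ ⟪f - x, g - f⟫ := by
  refine and_congr_right fun hf => ?_
  have hiInf : (∀ g ∈ F, dist x f ≤ dist x g) ↔ ‖x - f‖ = ⨅ w : F, ‖x - w‖ := by
    have : Nonempty F := ⟨⟨f, hf⟩⟩
    have hle (g : F) : ⨅ w : F, ‖x - w‖ ≤ ‖x - g‖ :=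
      ciInf_le ⟨0, by rintro _ ⟨w, rfl⟩; exact norm_nonneg _⟩ g
    simp only [dist_eq_norm]
    exact ⟨fun h => (le_ciInf fun g : F => h g g.2).antisymm (hle ⟨f, hf⟩),
      fun h g hg => h.trans_le (hle ⟨g, hg⟩)⟩
  rw [hiInf, norm_eq_iInf_iff_real_inner_le_zero hF hf]
  refine forall₂_congr fun g _ => ?_
  rw [← neg_sub x f, inner_neg_left, neg_nonneg]

lemma exists_isNearestPt (hclosed : IsClosed F) (hne : F.Nonempty) (x : E d) :
    ∃ f, IsNearestPt F x f := by
  obtain ⟨f, hf, hdist⟩ := hclosed.exists_infDist_eq_dist hne x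
  exact ⟨f, hf, fun g hg => hdist ▸ Metric.infDist_le_dist_of_mem hg⟩

lemma IsNearestPt.unique {g : E d} (hF : Convex ℝ F) (hf : IsNearestPt F x f)
    (hg : IsNearestPt F x g) : f = g := by
  rw [isNearestPt_iff hF] at hf hg
  have hfg := hf.2 g hg.1
  have hgf := hg.2 f hf.1
  have hsum : ⟪f - x, g - f⟫ + ⟪g - x, f - g⟫ = -⟪f - g, f - g⟫ := by
    simp only [inner_sub_left, inner_sub_right]
    ring
  exact sub_eq_zero.1 (inner_self_eq_zero.1 (le_antisymm (by linarith) real_inner_self_nonneg :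
    ⟪f - g, f - g⟫ = 0))

lemma mem_sub_normalCone_iff (hFP : F ⊆ P) (hF : Convex ℝ F) (hf : IsNearestPt F x f) :
    x ∈ F - normalCone P F ↔ ∀ p ∈ P, ⟪f - x, p - f⟫ ≤ 0 := by
  have hne : F.Nonempty := ⟨f, hf.1⟩
  constructor
  · rintro ⟨g, hg, z, hz, rfl⟩
    rw [mem_normalCone_iff hFP hF hne] at hz
    have hgnear : IsNearestPt F (g - z) g := by
      refine (isNearestPt_iff hF).2 ⟨hg, fun h hh => ?_⟩
      have := hz h hh g (hFP hg)
      rwa [← neg_sub, inner_neg_right, neg_nonpos, ← sub_sub_cancel g z] at this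
    obtain rfl := hf.unique hF hgnear
    simpa only [sub_sub_cancel] using hz f hg
  · intro hpos
    refine ⟨f, hf.1, f - x, (mem_normalCone_iff hFP hF hne).2 fun g hg p hp => ?_,
      sub_sub_cancel f x⟩
    have hg' := ((isNearestPt_iff hF).1 hf).2 g hg
    have hp' := hpos p hp
    rw [← sub_sub_sub_cancel_right p g f, inner_sub_right]
    linarith

variable {ι : Type*} {y : ι → E d} {c : ι → ℝ} {A I : Finset ι}

lemma face_subset_polyhedron : face y c A I ⊆ polyhedron y c A := sep_subset _ _

lemma sum_strata_notMem_sub_normalCone_eq_zero (y : ι → E d) (c : ι → ℝ) (A : Finset ι)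
    (x : E d) :
    ∑ I ∈ strata y c A with x ∉ face y c A I - normalCone (polyhedron y c A) (face y c A I),
      (-1 : ℤ) ^ finrank ℝ (direction y I) = 0 := by
  have hnearest (I : Finset ι) : ∃ f, I ∈ strata y c A → IsNearestPt (face y c A I) x f := by
    by_cases hI : I ∈ strata y c A
    · exact (exists_isNearestPt isClosed_face (face_nonempty_of_mem_strata hI) x).imp
        fun f hf _ => hf
    · exact ⟨0, fun h => absurd h hI⟩
  choose π hπ using hnearest
  rw [← Finset.sum_fiberwise_of_maps_to fun I => Finset.mem_image_of_mem π]
  refine Finset.sum_eq_zero fun f hf => ?_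
  obtain ⟨J, hJ, rfl⟩ := Finset.mem_image.1 hf
  obtain ⟨hJ, hxJ⟩ := Finset.mem_filter.1 hJ
  have hJf := hπ J hJ
  have hnot := mt (mem_sub_normalCone_iff face_subset_polyhedron convex_face hJf).2 hxJ
  obtain ⟨q, hq, hpos⟩ : ∃ q ∈ polyhedron y c A, 0 < ⟪π J - x, q - π J⟫ := by
    simpa only [not_forall, not_le, exists_prop] using hnot
  rw [← sum_strata_minimal_eq_zero hJf.1.1 hq hpos]
  refine Finset.sum_congr (Finset.ext fun I => ?_) fun _ _ => rfl
  rw [Finset.mem_filter, Finset.mem_filter, Finset.mem_filter, and_assoc,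
    ← isNearestPt_iff convex_face]
  refine and_congr_right fun hI =>
    ⟨fun h => h.2 ▸ hπ I hI, fun h => ⟨?_, (hπ I hI).unique convex_face h⟩⟩
  rwa [mem_sub_normalCone_iff face_subset_polyhedron convex_face h]

lemma isFaceOf_iff : IsFaceOf P F ↔
    ∃ (w : E d) (b : ℝ), (∀ z ∈ P, ⟪w, z⟫ ≤ b) ∧ F = {z ∈ P | ⟪w, z⟫ = b} := by
  refine or_iff_right_of_imp ?_
  rintro rfl
  exact ⟨0, 0, fun z _ => (inner_zero_left z).le, by simp⟩

lemma isFaceOf_face (hI : I ⊆ A) : IsFaceOf (polyhedron y c A) (face y c A I) := by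
  have hle : ∀ z ∈ polyhedron y c A, ∀ i ∈ I, ⟪y i, z⟫ ≤ c i := fun z hz i hi =>
    (real_inner_comm _ _).trans_le (hz i (hI hi))
  refine isFaceOf_iff.2 ⟨∑ i ∈ I, y i, ∑ i ∈ I, c i, fun z hz => ?_, ?_⟩
  · rw [sum_inner]
    exact Finset.sum_le_sum (hle z hz)
  · refine Set.ext fun z => and_congr_right fun hz => ?_
    rw [sum_inner, Finset.sum_eq_sum_iff_of_le (hle z hz)]
    exact forall₂_congr fun i _ => by rw [real_inner_comm]

lemma sdim_face (hI : I ∈ strata y c A) : sdim (face y c A I) = finrank ℝ (direction y I) := by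
  rw [sdim, direction_affineSpan, vectorSpan_face (mem_strata.1 hI).2]

lemma subset_face_activeSet (hFP : F ⊆ polyhedron y c A) (hf : f ∈ intrinsicInterior ℝ F) :
    F ⊆ face y c A (activeSet y c A f) := by
  intro g hg
  refine ⟨hFP hg, fun i hi => (hFP hg i (mem_activeSet.1 hi).1).antisymm ?_⟩
  obtain ⟨ε, hε, hext⟩ := exists_extend_of_mem_intrinsicInterior hf hg
  obtain ⟨hiA, hif⟩ := mem_activeSet.1 hi
  have hext := hFP hext i hiA
  rw [inner_add_left, real_inner_smul_left, inner_sub_left, hif] at hext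
  by_contra! hlt
  linarith [mul_pos hε (sub_pos.2 hlt)]

lemma IsFaceOf.exists_eq_face (hF : IsFaceOf (polyhedron y c A) F) (hne : F.Nonempty) :
    ∃ I ∈ strata y c A, F = face y c A I := by
  obtain ⟨w, b, hw, rfl⟩ := isFaceOf_iff.1 hF
  have hconv : Convex ℝ {z ∈ polyhedron y c A | ⟪w, z⟫ = b} :=
    convex_polyhedron.inter (convex_hyperplane (innerₛₗ ℝ w).isLinear b)
  obtain ⟨f, hf⟩ := hne.intrinsicInterior hconv
  obtain ⟨hfP, hfw⟩ := intrinsicInterior_subset hf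
  refine ⟨_, activeSet_mem_strata hfP, (subset_face_activeSet (sep_subset _ _) hf).antisymm
    fun g hg => ⟨hg.1, (hw g hg.1).antisymm ?_⟩⟩
  have hcell := mem_cell_activeSet hfP
  have hdir : f - g ∈ direction y (activeSet y c A f) := (sub_mem_direction_iff hg.2).2 hcell.1
  rw [← vectorSpan_cell ⟨f, hcell⟩, (isRelOpenConvex_cell ⟨f, hcell⟩).mem_vectorSpan_iff hcell]
    at hdir
  obtain ⟨s, hs, hsf⟩ := hdir
  have hext := hw _ (cell_subset_face hsf).1
  rw [inner_add_right, real_inner_smul_right, inner_sub_right, hfw] at hext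
  by_contra! hlt
  linarith [mul_pos hs (sub_pos.2 hlt)]

lemma setOf_mem_facesOfDim_eq_image (p : Set (E d) → Prop) (k : ℕ) :
    {F | F ∈ facesOfDim (polyhedron y c A) k ∧ p F} = face y c A ''
      ({I ∈ strata y c A | p (face y c A I) ∧ finrank ℝ (direction y I) = k} : Finset _) := by
  ext F
  simp only [facesOfDim, mem_ofPred_eq, mem_image, Finset.coe_filter]
  constructor
  · rintro ⟨⟨hF, hne, hdim⟩, hp⟩
    obtain ⟨I, hI, rfl⟩ := hF.exists_eq_face hne
    exact ⟨I, ⟨hI, hp, by rw [← sdim_face hI, hdim]⟩, rfl⟩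
  · rintro ⟨I, ⟨hI, hp, hdim⟩, rfl⟩
    exact ⟨⟨isFaceOf_face (mem_strata.1 hI).1, face_nonempty_of_mem_strata hI,
      by rw [sdim_face hI, hdim]⟩, hp⟩

lemma sum_ncard_facesOfDim (p : Set (E d) → Prop) :
    ∑ k ∈ Finset.range (d + 1),
        (-1 : ℤ) ^ k * ({F | F ∈ facesOfDim (polyhedron y c A) k ∧ p F}.ncard : ℤ) =
      ∑ I ∈ strata y c A with p (face y c A I), (-1) ^ finrank ℝ (direction y I) := by
  have hmaps : ∀ I ∈ {I ∈ strata y c A | p (face y c A I)},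
      finrank ℝ (direction y I) ∈ Finset.range (d + 1) := fun I _ => by
    rw [Finset.mem_range, Nat.lt_succ_iff]
    exact (Submodule.finrank_le _).trans_eq finrank_euclideanSpace_fin
  rw [← Finset.sum_fiberwise_of_maps_to hmaps]
  refine Finset.sum_congr rfl fun k _ => ?_
  rw [setOf_mem_facesOfDim_eq_image, (face_injOn_strata.mono ?_).ncard_image,
    Set.ncard_coe_finset, Finset.filter_filter, mul_comm, ← nsmul_eq_mul, ← Finset.sum_const]
  · exact Finset.sum_congr rfl fun I hI => by rw [(Finset.mem_filter.1 hI).2.2]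
  · exact Finset.coe_subset.2 (Finset.filter_subset _ _)

end Faces

/-- McMullen-type identity for polytopes:
`Σ_k (-1)^k Σ_{F ∈ F_k(P)} 1_{F - N_F(P)}(x) = 1` for all `x`. -/
theorem stmt12 {d : ℕ} {P : Set (E d)} (hP : IsPolyhedron P) (hne : P.Nonempty)
    (hbd : Bornology.IsBounded P) (x : E d) :
    ∑ k ∈ Finset.range (d + 1), (-1 : ℤ) ^ k *
        (Set.ncard {F : Set (E d) | F ∈ facesOfDim P k ∧ x ∈ F - normalCone P F} : ℤ)
      = 1 := by
  obtain ⟨m, y, c, rfl⟩ := hP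
  have hpoly : {z | ∀ i, ⟪z, y i⟫ ≤ c i} = polyhedron y c Finset.univ :=
    Set.ext fun z => by simp only [polyhedron, mem_ofPred_eq, Finset.mem_univ, true_implies]
  rw [hpoly] at hne hbd ⊢
  have hcomp := Metric.isCompact_of_isClosed_isBounded isClosed_polyhedron hbd
  have hsplit := Finset.sum_filter_add_sum_filter_not (strata y c Finset.univ)
    (fun I => x ∈ face y c Finset.univ I -
      normalCone (polyhedron y c Finset.univ) (face y c Finset.univ I))
    fun I => (-1 : ℤ) ^ finrank ℝ (direction y I)
  rwa [sum_strata_notMem_sub_normalCone_eq_zero, add_zero, sum_strata_eq_one hcomp hne,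
    ← sum_ncard_facesOfDim fun F => x ∈ F - normalCone (polyhedron y c Finset.univ) F] at hsplit
end
end
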